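/- arXiv:2301.13518 — 8 statements merged into one kernel-verified Lean document; each statement's English description precedes it below -/
import Mathlib

section
/- Let $a$ be a rational number with $a \notin \mathbb{Z}$, and let $s \geq 1$ be an integer. Then the functions $1$, $e^z$, $e^z E_{a,1}(-z)$, $e^z E_{a,2}(-z)$, \ldots, $e^z E_{a,s}(-z)$ are linearly independent over $\mathbb{C}(z)$: if $p, q, r_1, \ldots, r_s \in \mathbb{C}[z]$ are polynomials such that $p(z) + q(z) e^z + \sum_{j=1}^{s} r_j(z)\, e^z E_{a,j}(-z) = 0$ for all $z \in \mathbb{C}$, then $p = q = r_1 = \cdots = r_s = 0$. -/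
/-!
Multiplying the relation by `e^{-z}` and replacing `z` by `-z` turns it into
`Q(z) + ∑_{j=0}^{s} R_j(z) E_{a,j}(z) = 0`, where `E_{a,0} = e^z`. For `n` larger than all the
degrees involved, `n!` times the Taylor coefficient of order `n` is the value at `x = n` of the
rational function `∑_k x(x-1)⋯(x-k+1) ∑_j R_{j,k} / (x-k+a)^j`, where `R_{j,k}` is the coefficient
of `z^k` in `R_j`. This function has infinitely many zeros, hence vanishes identically. The points
`k - a` are pairwise distinct, and the falling factorials do not vanish there because `a ∉ ℤ`, so the
polar part at each of them must vanish (`coeff_eq_zero_of_sum`), that is, `R_j = 0` for `j ≥ 1`. What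
remains is `p + q e^z = 0`, excluded by the periodicity of `exp`
(`eq_zero_of_add_mul_exp`).
-/

/-- The entire function `E_{a,j}(z) = ∑_{n≥0} z^n / (n! (n+a)^j)`. -/
noncomputable def Efun (a : ℂ) (j : ℕ) (z : ℂ) : ℂ :=
  ∑' n : ℕ, z ^ n / (n.factorial * ((n : ℂ) + a) ^ j)

/-! ### Power series expansions -/

/-- A power series whose sum is zero everywhere has zero coefficients. -/
lemma coeff_eq_zero_of_hasSum (c : ℕ → ℂ) (h : ∀ z : ℂ, HasSum (fun n => c n * z ^ n) 0) (n : ℕ) :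
    c n = 0 := by
  have h1 : HasFPowerSeriesAt (fun _ : ℂ => (0 : ℂ)) (FormalMultilinearSeries.ofScalars ℂ c) 0 := by
    rw [hasFPowerSeriesAt_iff]
    refine Filter.Eventually.of_forall fun z => ?_
    simpa [FormalMultilinearSeries.coeff_ofScalars, mul_comm] using h z
  have h2 := h1.eq_zero
  have h3 : (FormalMultilinearSeries.ofScalars ℂ c).coeff n = 0 := by
    rw [h2]; rfl
  simpa [FormalMultilinearSeries.coeff_ofScalars] using h3

/-- Multiplying a power series by a polynomial multiplies its sum by the value of the
polynomial. -/
lemma hasSum_polynomial_mul (F : PowerSeries ℂ) (z v : ℂ)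
    (hF : HasSum (fun n => PowerSeries.coeff n F * z ^ n) v) (R : Polynomial ℂ) :
    HasSum (fun n => PowerSeries.coeff n ((R : PowerSeries ℂ) * F) * z ^ n) (R.eval z * v) := by
  induction R using Polynomial.induction_on with
  | C c =>
    simpa [mul_assoc] using hF.mul_left c
  | add p q hp hq =>
    simpa [add_mul] using hp.add hq
  | monomial k c ih =>
    have h1 := ih.mul_left z
    rw [← hasSum_nat_add_iff' 1]
    have e : ((Polynomial.C c * Polynomial.X ^ (k + 1) : Polynomial ℂ) : PowerSeries ℂ) * F
        = PowerSeries.X * (((Polynomial.C c * Polynomial.X ^ k : Polynomial ℂ) : PowerSeries ℂ)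
          * F) := by
      push_cast; ring
    rw [e]
    have e1 : (fun n => PowerSeries.coeff (n + 1) (PowerSeries.X *
        (((Polynomial.C c * Polynomial.X ^ k : Polynomial ℂ) : PowerSeries ℂ) * F)) * z ^ (n + 1))
        = fun n => z * (PowerSeries.coeff n
          (((Polynomial.C c * Polynomial.X ^ k : Polynomial ℂ) : PowerSeries ℂ) * F) * z ^ n) := by
      funext n
      rw [PowerSeries.coeff_succ_X_mul, pow_succ]
      ac_rfl
    have e2 : (Polynomial.C c * Polynomial.X ^ (k + 1)).eval z * v -
        ∑ i ∈ Finset.range 1, PowerSeries.coeff i (PowerSeries.X *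
          (((Polynomial.C c * Polynomial.X ^ k : Polynomial ℂ) : PowerSeries ℂ) * F)) * z ^ i
        = z * ((Polynomial.C c * Polynomial.X ^ k).eval z * v) := by
      simp; ring
    rw [e1, e2]
    exact h1

lemma hasSum_coe (Q : Polynomial ℂ) (z : ℂ) :
    HasSum (fun n => PowerSeries.coeff n (Q : PowerSeries ℂ) * z ^ n) (Q.eval z) := by
  have h1 : HasSum (fun n => PowerSeries.coeff n (1 : PowerSeries ℂ) * z ^ n) 1 := by
    convert hasSum_single (f := fun n => PowerSeries.coeff n (1 : PowerSeries ℂ) * z ^ n) 0 ?_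
    · simp
    · intro n hn
      simp [PowerSeries.coeff_one, hn]
  simpa using hasSum_polynomial_mul 1 z 1 h1 Q

/-- As `|n + a| ≥ 1` for large `n`, the exponential series is a majorant of that of `E_{a,j}`, which
therefore converges absolutely. -/
lemma hasSum_Efun (a : ℂ) (j : ℕ) (z : ℂ) :
    HasSum (fun n : ℕ => (((n.factorial : ℂ) * ((n : ℂ) + a) ^ j)⁻¹) * z ^ n) (Efun a j z) := by
  have hs : Summable (fun n : ℕ => z ^ n / ((n.factorial : ℂ) * ((n : ℂ) + a) ^ j)) := by
    have h0 : Summable (fun n : ℕ => ‖z‖ ^ n / (n.factorial : ℝ)) :=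
      Real.summable_pow_div_factorial ‖z‖
    refine Summable.of_norm_bounded_eventually_nat h0 ?_
    obtain ⟨N, hN⟩ := exists_nat_ge (‖a‖ + 1)
    filter_upwards [Filter.eventually_ge_atTop N] with n hn
    have h1 : 1 ≤ ‖(n : ℂ) + a‖ := by
      have h2 := norm_sub_le ((n : ℂ) + a) a
      have h3 : (N : ℝ) ≤ n := by exact_mod_cast hn
      simp only [add_sub_cancel_right, Complex.norm_natCast] at h2
      linarith
    rw [norm_div, norm_mul, norm_pow, norm_pow, Complex.norm_natCast]
    have h4 : 1 ≤ ‖(n : ℂ) + a‖ ^ j := one_le_pow₀ h1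
    have h5 : (0 : ℝ) < n.factorial := by exact_mod_cast n.factorial_pos
    gcongr
    nlinarith
  have h := hs.hasSum
  unfold Efun
  convert h using 1
  funext n
  rw [div_eq_mul_inv, mul_comm]

lemma Efun_zero (a z : ℂ) : Efun a 0 z = Complex.exp z := by
  rw [Complex.exp_eq_exp_ℂ, NormedSpace.exp_eq_tsum_div]
  simp [Efun]

/-! ### Independence of the polar parts -/

/-- Uniqueness of polar parts, after clearing denominators. -/
lemma coeff_eq_zero_of_sum (a : ℂ) (ha : ∀ m : ℤ, a ≠ m) (s M : ℕ) (R : ℕ → ℕ → ℂ)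
    (h : ∀ n : ℕ, M ≤ n → ∑ k ∈ Finset.range M, ∑ j ∈ Finset.range (s + 1),
      R j k * (n.descFactorial k : ℂ) / ((n : ℂ) - k + a) ^ j = 0) :
    ∀ k < M, ∀ j, 1 ≤ j → j ≤ s → R j k = 0 := by
  classical
  -- `L k` vanishes exactly at the pole `k - a`, and `T k` is the numerator of the polar part there.
  let L : ℕ → Polynomial ℂ := fun k => Polynomial.X - Polynomial.C ((k : ℂ) - a)
  let T : ℕ → Polynomial ℂ := fun k =>
    ∑ j ∈ Finset.range (s + 1), Polynomial.C (R j k) * L k ^ (s - j)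
  -- The rational function in `h`, multiplied by all `L k ^ s`.
  let G : Polynomial ℂ := ∑ k ∈ Finset.range M,
    descPochhammer ℂ k * T k * ∏ k' ∈ (Finset.range M).erase k, L k' ^ s
  have hG : G = 0 := by
    refine Polynomial.eq_zero_of_infinite_isRoot G ?_
    refine Set.Infinite.mono (s := (fun n : ℕ => (n : ℂ)) '' Set.Ici M) ?_
      ((Set.Ici_infinite M).image (Nat.cast_injective.injOn))
    rintro _ ⟨n, hn, rfl⟩
    have hne : ∀ k : ℕ, (n : ℂ) - k + a ≠ 0 := by
      intro k hk
      apply ha ((k : ℤ) - n)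
      push_cast
      linear_combination hk
    have hL : ∀ k : ℕ, (L k).eval (n : ℂ) = (n : ℂ) - k + a := by
      intro k; simp [L]; ring
    change G.eval (n : ℂ) = 0
    have key : G.eval (n : ℂ) = (∑ k ∈ Finset.range M, ∑ j ∈ Finset.range (s + 1),
        R j k * (n.descFactorial k : ℂ) / ((n : ℂ) - k + a) ^ j) *
        ∏ k' ∈ Finset.range M, ((n : ℂ) - k' + a) ^ s := by
      simp only [G, T, Polynomial.eval_finsetSum, Polynomial.eval_mul, Polynomial.eval_prod,
        Polynomial.eval_pow, Polynomial.eval_C, hL, descPochhammer_eval_eq_descFactorial]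
      rw [Finset.sum_mul]
      refine Finset.sum_congr rfl fun k hk => ?_
      rw [← Finset.mul_prod_erase _ _ hk, ← mul_assoc]
      congr 1
      rw [Finset.mul_sum, Finset.sum_mul]
      refine Finset.sum_congr rfl fun j hj => ?_
      have hj' : j ≤ s := by simpa [Nat.lt_succ_iff] using hj
      rw [← pow_sub_mul_pow ((n : ℂ) - k + a) hj']
      have := pow_ne_zero j (hne k)
      field_simp
    rw [key, h n hn, zero_mul]
  intro k hk
  have hkM : k ∈ Finset.range M := Finset.mem_range.2 hk
  -- `L k ^ s` divides every other summand of `G = 0`, hence also the summand of index `k`.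
  have hLdvd : L k ^ s ∣ descPochhammer ℂ k * T k *
      ∏ k' ∈ (Finset.range M).erase k, L k' ^ s := by
    have h1 : G = descPochhammer ℂ k * T k * ∏ k' ∈ (Finset.range M).erase k, L k' ^ s +
        ∑ i ∈ (Finset.range M).erase k,
          descPochhammer ℂ i * T i * ∏ k' ∈ (Finset.range M).erase i, L k' ^ s :=
      (Finset.add_sum_erase _ _ hkM).symm
    have h2 : L k ^ s ∣ ∑ i ∈ (Finset.range M).erase k,
          descPochhammer ℂ i * T i * ∏ k' ∈ (Finset.range M).erase i, L k' ^ s := by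
      refine Finset.dvd_sum fun i hi => Dvd.dvd.mul_left ?_ _
      refine Finset.dvd_prod_of_mem (fun k' => L k' ^ s) ?_
      exact Finset.mem_erase.2 ⟨(Finset.ne_of_mem_erase hi).symm, hkM⟩
    rw [hG] at h1
    exact (dvd_add_left h2).1 (h1 ▸ dvd_zero _)
  have hirr : Irreducible (L k) := Polynomial.irreducible_X_sub_C _
  have hcop : ∀ P : Polynomial ℂ, P.eval ((k : ℂ) - a) ≠ 0 → IsCoprime (L k ^ s) P := by
    intro P hP
    refine IsCoprime.pow_left ((hirr.coprime_iff_not_dvd).2 ?_)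
    rwa [Polynomial.dvd_iff_isRoot]
  have h3 : L k ^ s ∣ T k := by
    have h4 := (hcop (∏ k' ∈ (Finset.range M).erase k, L k' ^ s) (by
      rw [Polynomial.eval_prod]
      refine Finset.prod_ne_zero_iff.2 fun k' hk' => ?_
      rw [Polynomial.eval_pow]
      refine pow_ne_zero _ ?_
      have : (k : ℂ) ≠ k' := by exact_mod_cast (Finset.ne_of_mem_erase hk').symm
      simpa [L, sub_eq_zero] using this)).dvd_of_dvd_mul_right hLdvd
    refine (hcop (descPochhammer ℂ k) ?_).dvd_of_dvd_mul_left h4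
    rw [descPochhammer_eval_eq_prod_range]
    refine Finset.prod_ne_zero_iff.2 fun i _ hi => ha ((k : ℤ) - i) ?_
    push_cast
    linear_combination -hi
  -- `T k` without its `j = 0` term, a multiple of `L k ^ s`; what is left has degree below `s`.
  let T' : Polynomial ℂ := ∑ j ∈ Finset.range s, Polynomial.C (R (j + 1) k) * L k ^ (s - (j + 1))
  have hT' : T' = 0 := by
    have h5 : L k ^ s ∣ T' := by
      have h6 : T k = T' + Polynomial.C (R 0 k) * L k ^ s := by
        simp only [T, T']
        rw [Finset.sum_range_succ']
        simp
      rw [h6] at h3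
      exact (dvd_add_left (Dvd.intro_left _ rfl)).1 h3
    refine Polynomial.eq_zero_of_dvd_of_degree_lt h5 ?_
    have hd : (L k ^ s).degree = s := by
      simp only [L, Polynomial.degree_pow, Polynomial.degree_X_sub_C]; simp
    rw [hd]
    refine lt_of_le_of_lt (Polynomial.degree_sum_le _ _) ?_
    rw [Finset.sup_lt_iff (by exact WithBot.bot_lt_coe s)]
    intro j hj
    have hj' := Finset.mem_range.1 hj
    refine lt_of_le_of_lt (b := ((s - (j + 1) : ℕ) : WithBot ℕ)) ?_ ?_
    · rw [← Polynomial.smul_eq_C_mul]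
      refine (Polynomial.degree_smul_le _ _).trans ?_
      simp only [L, Polynomial.degree_pow, Polynomial.degree_X_sub_C]; simp
    · have : s - (j + 1) < s := by omega
      exact_mod_cast this
  intro j hj1 hjs
  -- Recentring at the pole turns `T'` into a polynomial with the `R j k` as coefficients.
  have h7 : T'.comp (Polynomial.X + Polynomial.C ((k : ℂ) - a)) =
      ∑ j ∈ Finset.range s, Polynomial.C (R (j + 1) k) * Polynomial.X ^ (s - (j + 1)) := by
    simp only [T', L, Polynomial.comp, Polynomial.eval₂_finsetSum, Polynomial.eval₂_mul,
      Polynomial.eval₂_C, Polynomial.eval₂_pow, Polynomial.eval₂_sub, Polynomial.eval₂_X,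
      add_sub_cancel_right]
  rw [hT', Polynomial.zero_comp] at h7
  have h8 := congrArg (fun P => Polynomial.coeff P (s - j)) h7
  simp only [Polynomial.coeff_zero, Polynomial.finsetSum_coeff, Polynomial.coeff_C_mul,
    Polynomial.coeff_X_pow] at h8
  rw [Finset.sum_eq_single (j - 1)] at h8
  · have e : j - 1 + 1 = j := by omega
    simpa [e] using h8.symm
  · intro i hi hne
    have := Finset.mem_range.1 hi
    rw [if_neg (by omega), mul_zero]
  · intro hn
    exact absurd (Finset.mem_range.2 (by omega)) hn

/-! ### Relations between `1`, `exp` and the `E_{a,j}` -/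

/-- `exp` is constant on `w + 2πiℤ`, so the polynomial `p + e^w q` has infinitely many zeros;
compare `w = 0` and `w = πi`. -/
lemma eq_zero_of_add_mul_exp (p q : Polynomial ℂ)
    (h : ∀ z : ℂ, p.eval z + q.eval z * Complex.exp z = 0) : p = 0 ∧ q = 0 := by
  have key : ∀ w : ℂ, p + Polynomial.C (Complex.exp w) * q = 0 := by
    intro w
    refine Polynomial.eq_zero_of_infinite_isRoot _ ?_
    have hinj : Function.Injective (fun n : ℕ => w + n * (2 * Real.pi * Complex.I)) := by
      intro m n hmn
      have h1 : (2 * Real.pi * Complex.I : ℂ) ≠ 0 := Complex.two_pi_I_ne_zero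
      have h2 := mul_right_cancel₀ h1 (add_left_cancel hmn)
      exact_mod_cast h2
    refine (Set.infinite_range_of_injective hinj).mono ?_
    rintro _ ⟨n, rfl⟩
    have h1 := h (w + n * (2 * Real.pi * Complex.I))
    rw [Complex.exp_add, Complex.exp_nat_mul_two_pi_mul_I, mul_one] at h1
    simp only [Set.mem_ofPred_eq, Polynomial.IsRoot.def, Polynomial.eval_add, Polynomial.eval_mul,
      Polynomial.eval_C]
    linear_combination h1
  have h0 := key 0
  have h1 := key (Real.pi * Complex.I)
  rw [Complex.exp_zero, Polynomial.C_1, one_mul] at h0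
  rw [Complex.exp_pi_mul_I, Polynomial.C_neg, Polynomial.C_1, neg_one_mul] at h1
  have hp : (2 : Polynomial ℂ) * p = 0 := by linear_combination h0 + h1
  have hp0 : p = 0 := by simpa using hp
  subst hp0
  exact ⟨rfl, by simpa using h0⟩

/-- Linear independence over `ℂ(z)` of the `E_{a,j}`, `1 ≤ j ≤ s`, modulo the span of `1` and
`E_{a,0} = exp`. -/
lemma eq_zero_of_Efun_relation (a : ℂ) (ha : ∀ m : ℤ, a ≠ m) (s : ℕ) (Q : Polynomial ℂ)
    (R : ℕ → Polynomial ℂ)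
    (h : ∀ z : ℂ, Q.eval z + ∑ j ∈ Finset.range (s + 1), (R j).eval z * Efun a j z = 0) :
    ∀ j, 1 ≤ j → j ≤ s → R j = 0 := by
  let F : ℕ → PowerSeries ℂ := fun j =>
    PowerSeries.mk fun n => ((n.factorial : ℂ) * ((n : ℂ) + a) ^ j)⁻¹
  have hc : ∀ n, PowerSeries.coeff n ((Q : PowerSeries ℂ) +
      ∑ j ∈ Finset.range (s + 1), (R j : PowerSeries ℂ) * F j) = 0 := by
    refine coeff_eq_zero_of_hasSum _ fun z => ?_
    have h1 := (hasSum_coe Q z).add (hasSum_sum (s := Finset.range (s + 1)) fun j _ =>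
      hasSum_polynomial_mul (F j) z (Efun a j z) (by simpa [F] using hasSum_Efun a j z) (R j))
    rw [h z] at h1
    convert h1 using 1
    funext n
    rw [map_add, map_sum, add_mul, Finset.sum_mul]
  -- A bound exceeding all the degrees.
  let M : ℕ := Q.natDegree + 1 + ∑ j ∈ Finset.range (s + 1), ((R j).natDegree + 1)
  have hM : ∀ j ∈ Finset.range (s + 1), (R j).natDegree < M := by
    intro j hj
    have := Finset.single_le_sum (f := fun j => (R j).natDegree + 1) (fun _ _ => Nat.zero_le _) hj
    simp only [M]
    omega
  have hzero := coeff_eq_zero_of_sum a ha s M (fun j k => (R j).coeff k) (by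
    intro n hn
    have h1 := hc n
    rw [map_add, map_sum, Polynomial.coeff_coe,
      Polynomial.coeff_eq_zero_of_natDegree_lt (by simp only [M] at hn; omega), zero_add] at h1
    have h2 := congrArg (fun x => (n.factorial : ℂ) * x) h1
    simp only [mul_zero, Finset.mul_sum] at h2
    rw [Finset.sum_comm, ← h2]
    refine Finset.sum_congr rfl fun j hj => ?_
    rw [PowerSeries.coeff_mul, Finset.Nat.sum_antidiagonal_eq_sum_range_succ_mk, Finset.mul_sum]
    have hsub : Finset.range M ⊆ Finset.range n.succ := Finset.range_mono (by omega)
    rw [← Finset.sum_subset hsub]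
    · refine Finset.sum_congr rfl fun k hk => ?_
      have hkn : k ≤ n := by have := Finset.mem_range.1 hk; omega
      have hf : ((n - k).factorial : ℂ) * (n.descFactorial k : ℂ) = n.factorial := by
        exact_mod_cast Nat.factorial_mul_descFactorial hkn
      have hf0 : ((n - k).factorial : ℂ) ≠ 0 := by exact_mod_cast (n - k).factorial_ne_zero
      simp only [Polynomial.coeff_coe, F, PowerSeries.coeff_mk, Nat.cast_sub hkn]
      rw [← hf, mul_inv]
      field_simp
    · intro k _ hk
      have hk' : M ≤ k := by simpa using hk
      simp only [Polynomial.coeff_coe]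
      rw [Polynomial.coeff_eq_zero_of_natDegree_lt (lt_of_lt_of_le (hM j hj) hk')]
      simp)
  intro j hj1 hjs
  ext k
  rw [Polynomial.coeff_zero]
  by_cases hk : k < M
  · exact hzero k hk j hj1 hjs
  · exact Polynomial.coeff_eq_zero_of_natDegree_lt
      (lt_of_lt_of_le (hM j (Finset.mem_range.2 (by omega))) (not_lt.1 hk))

theorem stmt0 (a : ℚ) (ha : ¬ ∃ m : ℤ, a = m) (s : ℕ) (hs : 1 ≤ s)
    (p q : Polynomial ℂ) (r : ℕ → Polynomial ℂ)
    (h : ∀ z : ℂ, p.eval z + q.eval z * Complex.exp z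
      + ∑ j ∈ Finset.Icc 1 s, (r j).eval z * (Complex.exp z * Efun (a : ℂ) j (-z)) = 0) :
    p = 0 ∧ q = 0 ∧ ∀ j ∈ Finset.Icc 1 s, r j = 0 := by
  have ha' : ∀ m : ℤ, (a : ℂ) ≠ m := fun m hm => ha ⟨m, by exact_mod_cast hm⟩
  have hr : ∀ j, 1 ≤ j → j ≤ s → r j = 0 := by
    have h1 := eq_zero_of_Efun_relation (a : ℂ) ha' s (q.comp (-Polynomial.X))
      (fun j => if j = 0 then p.comp (-Polynomial.X) else (r j).comp (-Polynomial.X)) (by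
        intro z
        have h2 := h (-z)
        have h3 : Complex.exp z * Complex.exp (-z) = 1 := by
          rw [← Complex.exp_add, add_neg_cancel, Complex.exp_zero]
        have e : ∑ j ∈ Finset.Icc 1 s,
            (r j).eval (-z) * (Complex.exp (-z) * Efun (a : ℂ) j (- -z)) =
            Complex.exp (-z) *
              ∑ j ∈ Finset.range s, (r (j + 1)).eval (-z) * Efun (a : ℂ) (j + 1) z := by
          rw [Finset.range_eq_Ico, Finset.sum_Ico_add' (fun j => (r j).eval (-z) * Efun (a : ℂ) j z),
            Finset.mul_sum]
          refine Finset.sum_congr (by ext; simp) fun j _ => ?_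
          rw [neg_neg]; ring
        rw [e] at h2
        rw [Finset.sum_range_succ']
        simp only [Nat.add_eq_zero_iff, one_ne_zero, and_false, if_false, if_true, Efun_zero,
          Polynomial.eval_comp, Polynomial.eval_neg, Polynomial.eval_X]
        linear_combination Complex.exp z * h2 - (q.eval (-z) +
          ∑ j ∈ Finset.range s, (r (j + 1)).eval (-z) * Efun (a : ℂ) (j + 1) z) * h3)
    intro j hj1 hjs
    have h2 := h1 j hj1 hjs
    rw [if_neg (by omega)] at h2
    have h3 := congrArg (fun P => Polynomial.comp P (-Polynomial.X)) h2
    simpa [Polynomial.comp_assoc] using h3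
  have hpq := eq_zero_of_add_mul_exp p q (by
    intro z
    have h1 := h z
    rw [Finset.sum_eq_zero, add_zero] at h1
    · exact h1
    · intro j hj
      have := Finset.mem_Icc.1 hj
      rw [hr j this.1 this.2]; simp)
  exact ⟨hpq.1, hpq.2, fun j hj => hr j (Finset.mem_Icc.1 hj).1 (Finset.mem_Icc.1 hj).2⟩
end

section
/- Let $a > 0$ be a real number, $s \geq 0$ an integer, and $z > 0$ a real number. Then the integral $\int_0^z t^{a-1} (\log t)^s e^{-t}\,dt$ converges and equals $\sum_{k=0}^{s} \frac{(-1)^k\, s!}{(s-k)!}\, z^{a} (\log z)^{s-k}\, E_{a,k+1}(-z)$. -/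
/-!
Expanding `exp (-t) = ∑ (-t)^n / n!` reduces the claim to the integrals of `t^(b-1) (log t)^s`
over `(0, z]` with `b = n + a`. These have a closed form as a finite sum, obtained by induction
on `s` from integration by parts (`integral_rpow_mul_log_pow`). The sum and the integral may be
exchanged because on `(0, z]` the `n`-th term is dominated by `z^n / n!` times the fixed
integrable function `|t^(a-1) (log t)^s|`. Integrability and the vanishing boundary term at `0`
both come from the continuity of `t^c (log t)^s` on `[0, ∞)` for `c > 0`
(`continuousOn_rpow_mul_log_pow`).
-/

/-- The (real-valued) function `E_{a,j}(z) = ∑_{n≥0} z^n / (n! (n+a)^j)`. -/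
noncomputable def Ereal (a : ℝ) (j : ℕ) (z : ℝ) : ℝ :=
  ∑' n : ℕ, z ^ n / (n.factorial * ((n : ℝ) + a) ^ j)

/-- At `0` the value is `0` (as `0 ^ c = 0`), which is also the limit from the right. -/
lemma continuousOn_rpow_mul_log_pow (s : ℕ) : ∀ c : ℝ, 0 < c →
    ContinuousOn (fun t : ℝ => t ^ c * Real.log t ^ s) (Set.Ici 0) := by
  have base : ∀ c : ℝ, 0 < c →
      ContinuousOn (fun t : ℝ => t ^ c * Real.log t) (Set.Ici 0) := by
    intro c hc t ht
    rcases eq_or_lt_of_le (show (0 : ℝ) ≤ t from ht) with rfl | h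
    · rw [← continuousWithinAt_Ioi_iff_Ici]
      have := tendsto_log_mul_rpow_nhdsGT_zero hc
      simpa [ContinuousWithinAt, Real.zero_rpow hc.ne', mul_comm] using this
    · exact ((Real.continuousAt_rpow_const t c (Or.inl h.ne')).mul
        (Real.continuousAt_log h.ne')).continuousWithinAt
  induction s with
  | zero =>
    intro c hc
    simpa using (Real.continuous_rpow_const hc.le).continuousOn
  | succ s ih =>
    intro c hc
    refine ((ih (c / 2) (by positivity)).mul (base (c / 2) (by positivity))).congr ?_
    intro t ht
    have h : t ^ c = t ^ (c / 2) * t ^ (c / 2) := by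
      rw [← Real.rpow_add_of_nonneg ht (by positivity) (by positivity)]
      congr 1
      ring
    simp only [h, Pi.mul_apply]
    ring

lemma intervalIntegrable_rpow_mul_log_pow (s : ℕ) {b z : ℝ} (hb : 0 < b) (hz : 0 < z) :
    IntervalIntegrable (fun t : ℝ => t ^ (b - 1) * Real.log t ^ s) MeasureTheory.volume 0 z := by
  -- Half of the exponent absorbs the logarithms, the other half keeps the power integrable.
  have h1 : IntervalIntegrable (fun t : ℝ => t ^ (b / 2 - 1)) MeasureTheory.volume 0 z :=
    intervalIntegral.intervalIntegrable_rpow' (by linarith)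
  have h2 : ContinuousOn (fun t : ℝ => t ^ (b / 2) * Real.log t ^ s) (Set.uIcc 0 z) :=
    (continuousOn_rpow_mul_log_pow s (b / 2) (by positivity)).mono (by
      rw [Set.uIcc_of_le hz.le]
      exact Set.Icc_subset_Ici_self)
  refine (h1.continuousOn_mul h2).congr ?_
  intro t ht
  rw [Set.uIoc_of_le hz.le] at ht
  have h : t ^ (b - 1) = t ^ (b / 2) * t ^ (b / 2 - 1) := by
    rw [← Real.rpow_add ht.1]
    congr 1
    ring
  simp only [h]
  ring

/-- One integration by parts, in the form of the fundamental theorem of calculus for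
`t^b (log t)^(s+1) / b`. -/
lemma integral_rpow_mul_log_pow_succ (s : ℕ) {b z : ℝ} (hb : 0 < b) (hz : 0 < z) :
    ∫ t in (0 : ℝ)..z, t ^ (b - 1) * Real.log t ^ (s + 1)
      = z ^ b * Real.log z ^ (s + 1) / b
        - (s + 1) / b * ∫ t in (0 : ℝ)..z, t ^ (b - 1) * Real.log t ^ s := by
  have i1 := intervalIntegrable_rpow_mul_log_pow (s + 1) hb hz
  have i0 := (intervalIntegrable_rpow_mul_log_pow s hb hz).const_mul ((s + 1) / b)
  have key := intervalIntegral.integral_eq_sub_of_hasDerivAt_of_le hz.le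
    (f := fun t : ℝ => t ^ b * Real.log t ^ (s + 1) / b)
    (f' := fun t : ℝ => t ^ (b - 1) * Real.log t ^ (s + 1)
      + (s + 1) / b * (t ^ (b - 1) * Real.log t ^ s))
    (((continuousOn_rpow_mul_log_pow (s + 1) b hb).mono Set.Icc_subset_Ici_self).div_const b)
    (by
      intro t ht
      have ht0 : t ≠ 0 := ht.1.ne'
      have := ((Real.hasDerivAt_rpow_const (p := b) (Or.inl ht0)).mul
        ((Real.hasDerivAt_log ht0).pow (s + 1))).div_const b
      refine this.congr_deriv ?_
      have h : t ^ b = t ^ (b - 1) * t := by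
        rw [Real.rpow_sub_one ht0]
        field_simp
      simp only [h, Nat.add_sub_cancel, Pi.pow_apply]
      push_cast
      field_simp)
    (i1.add i0)
  rw [intervalIntegral.integral_add i1 i0, intervalIntegral.integral_const_mul] at key
  simp only [Real.zero_rpow hb.ne', zero_mul, zero_div, sub_zero] at key
  linarith

lemma integral_rpow_mul_log_pow (s : ℕ) {b z : ℝ} (hb : 0 < b) (hz : 0 < z) :
    ∫ t in (0 : ℝ)..z, t ^ (b - 1) * Real.log t ^ s
      = ∑ k ∈ Finset.range (s + 1), ((-1 : ℝ) ^ k * s.factorial / (s - k).factorial)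
          * z ^ b * Real.log z ^ (s - k) / b ^ (k + 1) := by
  induction s with
  | zero =>
    have := integral_rpow (a := 0) (b := z) (r := b - 1) (Or.inl (by linarith))
    simpa [Real.zero_rpow hb.ne'] using this
  | succ s ih =>
    rw [integral_rpow_mul_log_pow_succ s hb hz, ih, Finset.sum_range_succ' _ (s + 1),
      Finset.mul_sum, sub_eq_add_neg, add_comm, ← Finset.sum_neg_distrib]
    congr 1
    · refine Finset.sum_congr rfl fun k _ => ?_
      have hf : ((s - k).factorial : ℝ) ≠ 0 := by positivity
      rw [Nat.add_sub_add_right, Nat.factorial_succ]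
      push_cast
      field_simp
      ring
    · have hf : ((s + 1).factorial : ℝ) ≠ 0 := by positivity
      simp [hf]

lemma summable_Ereal {a : ℝ} (ha : 0 < a) (j : ℕ) (x : ℝ) :
    Summable fun n : ℕ => x ^ n / (n.factorial * ((n : ℝ) + a) ^ j) := by
  refine Summable.of_norm_bounded (g := fun n : ℕ => |x| ^ n / n.factorial * (1 / a ^ j))
    ((Real.summable_pow_div_factorial |x|).mul_right _) fun n => ?_
  rw [Real.norm_eq_abs, abs_div, abs_pow, abs_of_pos (a := _ * _) (by positivity),
    div_mul_div_comm, mul_one]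
  gcongr
  linarith [(Nat.cast_nonneg n : (0 : ℝ) ≤ n)]

theorem stmt4 (a : ℝ) (ha : 0 < a) (s : ℕ) (z : ℝ) (hz : 0 < z) :
    MeasureTheory.IntegrableOn
      (fun t : ℝ => t ^ (a - 1) * Real.log t ^ s * Real.exp (-t)) (Set.Ioc 0 z) ∧
    ∫ t in Set.Ioc (0 : ℝ) z, t ^ (a - 1) * Real.log t ^ s * Real.exp (-t)
      = ∑ k ∈ Finset.range (s + 1),
          ((-1 : ℝ) ^ k * s.factorial / (s - k).factorial)
            * z ^ a * Real.log z ^ (s - k) * Ereal a (k + 1) (-z) := by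
  have hI := intervalIntegrable_rpow_mul_log_pow s ha hz
  have toIoc : ∀ f : ℝ → ℝ, IntervalIntegrable f MeasureTheory.volume 0 z →
      MeasureTheory.IntegrableOn f (Set.Ioc 0 z) := fun f hf =>
    (intervalIntegrable_iff_integrableOn_Ioc_of_le hz.le).1 hf
  refine ⟨toIoc _ (hI.mul_continuousOn (by fun_prop)), ?_⟩
  set F : ℕ → ℝ → ℝ := fun n t =>
    t ^ (a - 1) * Real.log t ^ s * ((-t) ^ n / n.factorial) with hF
  have hFint : ∀ n, MeasureTheory.IntegrableOn (F n) (Set.Ioc 0 z) := fun n =>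
    toIoc _ (hI.mul_continuousOn (by fun_prop))
  have hFsum : Summable fun n => ∫ t in Set.Ioc 0 z, ‖F n t‖ := by
    refine Summable.of_nonneg_of_le
      (fun n => MeasureTheory.integral_nonneg fun t => norm_nonneg _) (fun n => ?_)
      ((Real.summable_pow_div_factorial z).mul_right
        (∫ t in Set.Ioc 0 z, ‖t ^ (a - 1) * Real.log t ^ s‖))
    rw [← MeasureTheory.integral_const_mul]
    refine MeasureTheory.setIntegral_mono_on (hFint n).norm
      ((toIoc _ hI).norm.const_mul _) measurableSet_Ioc fun t ht => ?_
    simp only [hF]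
    rw [norm_mul, mul_comm]
    gcongr
    rw [norm_div, norm_pow, norm_neg, Real.norm_of_nonneg ht.1.le, RCLike.norm_natCast]
    gcongr
    · exact ht.1.le
    · exact ht.2
  have hsum := MeasureTheory.hasSum_integral_of_summable_integral_norm hFint hFsum
  have hexp : ∀ t : ℝ, ∑' n, F n t = t ^ (a - 1) * Real.log t ^ s * Real.exp (-t) := by
    intro t
    simp only [hF]
    rw [tsum_mul_left, Real.exp_eq_exp_ℝ, NormedSpace.exp_eq_tsum_div]
  simp only [hexp] at hsum
  have hterm : ∀ n, ∫ t in Set.Ioc 0 z, F n t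
      = ∑ k ∈ Finset.range (s + 1), ((-1 : ℝ) ^ k * s.factorial / (s - k).factorial)
            * z ^ a * Real.log z ^ (s - k)
            * ((-z) ^ n / (n.factorial * ((n : ℝ) + a) ^ (k + 1))) := by
    intro n
    have hb : 0 < (n : ℝ) + a := by positivity
    have e : ∫ t in Set.Ioc 0 z, F n t = (-1) ^ n / n.factorial *
        ∫ t in (0 : ℝ)..z, t ^ ((n : ℝ) + a - 1) * Real.log t ^ s := by
      rw [intervalIntegral.integral_of_le hz.le, ← MeasureTheory.integral_const_mul]
      refine MeasureTheory.setIntegral_congr_fun measurableSet_Ioc fun t ht => ?_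
      simp only [hF]
      rw [add_sub_assoc, Real.rpow_add ht.1, Real.rpow_natCast, neg_pow]
      ring
    rw [e, integral_rpow_mul_log_pow s hb hz, Finset.mul_sum]
    refine Finset.sum_congr rfl fun k _ => ?_
    rw [Real.rpow_add hz, Real.rpow_natCast, neg_pow z]
    field_simp
  simp only [hterm] at hsum
  refine hsum.unique (hasSum_sum fun k _ => ?_)
  exact (summable_Ereal ha (k + 1) (-z)).hasSum.mul_left _
end

section
/- Let $a > 0$ be a real number and $s \geq 0$ an integer. Then the Gamma function is $s$ times differentiable at $a$ and its $s$-th derivative satisfies $\Gamma^{(s)}(a) = \int_0^{\infty} t^{a-1} (\log t)^s e^{-t}\,dt$, the integral being convergent. -/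
/-!
The proof differentiates under the integral sign. Write `G s x` for the integral
`∫ t ^ (x - 1) * (log t) ^ s * exp (-t)` over `(0, ∞)`. The factor `(log t) ^ s * exp (-t)` decays
faster than every power of `t` at infinity and is `O(t ^ (-b))` at `0` for every `b > 0`, so the
integral converges for all `x > 0`. For `x` within `a / 2` of `a` one has
`t ^ (x - 1) ≤ t ^ (a / 2 - 1) + t ^ (3 * a / 2 - 1)`, which dominates the derivative in `x` of the
integrand and gives `(G s)' = G (s + 1)` on `(0, ∞)`. Since `Γ = G 0` there, induction yields both
the smoothness of `Γ` and the formula for its iterated derivatives.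
-/

open Set Filter Topology MeasureTheory Asymptotics

namespace GammaDeriv

/-- The part of the integrand that does not depend on the parameter: `(log t) ^ s * exp (-t)`. -/
noncomputable def weight (s : ℕ) (t : ℝ) : ℝ := Real.log t ^ s * Real.exp (-t)

/-- The integral `∫ t ^ (x - 1) * (log t) ^ s * exp (-t)` over `(0, ∞)`, as a function of `x`. -/
noncomputable def G (s : ℕ) (x : ℝ) : ℝ :=
  ∫ t in Ioi (0 : ℝ), t ^ (x - 1) * Real.log t ^ s * Real.exp (-t)

lemma weight_top (s : ℕ) : ∀ a : ℝ, weight s =O[atTop] (fun t : ℝ => t ^ (-a)) := by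
  induction s with
  | zero =>
    intro a
    have h := (isLittleO_exp_neg_mul_rpow_atTop (zero_lt_one) (-a)).isBigO
    refine h.congr_left fun t => ?_
    simp [weight]
  | succ s ih =>
    intro a
    refine (isBigO_rpow_top_log_smul (lt_add_one a) (ih (a + 1))).congr_left fun t => ?_
    simp only [weight, smul_eq_mul]; ring

lemma weight_zero (s : ℕ) :
    ∀ b : ℝ, 0 < b → weight s =O[𝓝[>] 0] (fun t : ℝ => t ^ (-b)) := by
  induction s with
  | zero =>
    intro b hb
    refine IsBigO.of_bound 1 ?_
    filter_upwards [Ioc_mem_nhdsGT (zero_lt_one' ℝ)] with t ht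
    have h1 : 1 ≤ t ^ (-b) := Real.one_le_rpow_of_pos_of_le_one_of_nonpos ht.1 ht.2 (by linarith)
    have h2 : Real.exp (-t) ≤ 1 := Real.exp_le_one_iff.2 (by linarith [ht.1])
    simp only [weight, pow_zero, one_mul, Real.norm_eq_abs, Real.abs_exp]
    exact h2.trans (h1.trans (le_abs_self _))
  | succ s ih =>
    intro b hb
    refine (isBigO_rpow_zero_log_smul (half_lt_self hb) (ih (b / 2) (half_pos hb))).congr_left
      fun t => ?_
    simp only [weight, smul_eq_mul]; ring

lemma integrableOn_weight (s : ℕ) {x : ℝ} (hx : 0 < x) :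
    IntegrableOn (fun t : ℝ => t ^ (x - 1) * weight s t) (Ioi 0) := by
  refine mellin_convergent_of_isBigO_scalar ?_ (weight_top s (x + 1)) (lt_add_one x)
    (weight_zero s (x / 2) (half_pos hx)) (half_lt_self hx)
  refine ContinuousOn.locallyIntegrableOn (fun t ht => ?_) measurableSet_Ioi
  have h0 : t ≠ 0 := (mem_Ioi.1 ht).ne'
  exact (((Real.continuousAt_log h0).pow s).mul (by fun_prop)).continuousWithinAt

lemma integrableOn_G (s : ℕ) {x : ℝ} (hx : 0 < x) :
    IntegrableOn (fun t : ℝ => t ^ (x - 1) * Real.log t ^ s * Real.exp (-t)) (Ioi 0) := by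
  simpa only [weight, mul_assoc] using integrableOn_weight s hx

lemma rpow_le_add {t p q r : ℝ} (ht : 0 < t) (hpq : p ≤ q) (hqr : q ≤ r) :
    t ^ q ≤ t ^ p + t ^ r := by
  rcases le_total t 1 with h | h
  · linarith [Real.rpow_le_rpow_of_exponent_ge ht h hpq, Real.rpow_pos_of_pos ht r]
  · linarith [Real.rpow_le_rpow_of_exponent_le h hqr, Real.rpow_pos_of_pos ht p]

lemma hasDerivAt_G (s : ℕ) {a : ℝ} (ha : 0 < a) : HasDerivAt (G s) (G (s + 1) a) a := by
  refine (hasDerivAt_integral_of_dominated_loc_of_deriv_le (μ := volume.restrict (Ioi (0 : ℝ)))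
    (F := fun x t => t ^ (x - 1) * Real.log t ^ s * Real.exp (-t))
    (F' := fun x t => t ^ (x - 1) * Real.log t ^ (s + 1) * Real.exp (-t))
    (bound := fun t => ‖t ^ (a / 2 - 1) * weight (s + 1) t‖
      + ‖t ^ (3 * a / 2 - 1) * weight (s + 1) t‖)
    (Metric.ball_mem_nhds a (half_pos ha)) ?_ (integrableOn_G s ha)
    (integrableOn_G (s + 1) ha).aestronglyMeasurable ?_ ?_ ?_).2
  · filter_upwards [Ioi_mem_nhds ha] with x hx
    exact (integrableOn_G s hx).aestronglyMeasurable
  · refine (ae_restrict_mem measurableSet_Ioi).mono fun t ht x hx => ?_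
    have ht : 0 < t := ht
    rw [Metric.mem_ball, Real.dist_eq, abs_lt] at hx
    rw [mul_assoc]
    change ‖t ^ (x - 1) * weight (s + 1) t‖ ≤ _
    simp only [norm_mul, Real.norm_eq_abs, abs_of_pos (Real.rpow_pos_of_pos ht _), ← add_mul]
    gcongr
    exact rpow_le_add ht (by linarith) (by linarith)
  · exact (integrableOn_weight (s + 1) (by linarith)).norm.add
      (integrableOn_weight (s + 1) (by linarith)).norm
  · refine (ae_restrict_mem measurableSet_Ioi).mono fun t ht x _ => ?_
    have h := (((hasDerivAt_id x).sub_const 1).const_rpow (mem_Ioi.1 ht)).mul_const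
      (Real.log t ^ s) |>.mul_const (Real.exp (-t))
    refine h.congr_deriv ?_
    simp only [id]; ring

lemma contDiffOn_G (n : ℕ) : ∀ s : ℕ, ContDiffOn ℝ n (G s) (Ioi 0) := by
  induction n with
  | zero =>
    intro s
    exact contDiffOn_zero.2 fun x hx => (hasDerivAt_G s hx).continuousAt.continuousWithinAt
  | succ n ih =>
    intro s
    push_cast
    refine (contDiffOn_succ_iff_deriv_of_isOpen isOpen_Ioi).2
      ⟨fun x hx => (hasDerivAt_G s hx).differentiableAt.differentiableWithinAt, by simp, ?_⟩
    exact (ih (s + 1)).congr fun x hx => (hasDerivAt_G s hx).deriv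

lemma Gamma_eq_G {x : ℝ} (hx : 0 < x) : Real.Gamma x = G 0 x := by
  rw [Real.Gamma_eq_integral hx, G]
  simp only [pow_zero, mul_one, mul_comm (Real.exp _)]

lemma iteratedDeriv_Gamma (s : ℕ) : ∀ x : ℝ, 0 < x → iteratedDeriv s Real.Gamma x = G s x := by
  induction s with
  | zero => intro x hx; rw [iteratedDeriv_zero, Gamma_eq_G hx]
  | succ s ih =>
    intro x hx
    have h : iteratedDeriv s Real.Gamma =ᶠ[𝓝 x] G s := by
      filter_upwards [Ioi_mem_nhds hx] with y hy using ih y hy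
    rw [iteratedDeriv_succ, h.deriv_eq, (hasDerivAt_G s hx).deriv]

end GammaDeriv

theorem stmt6 (a : ℝ) (ha : 0 < a) (s : ℕ) :
    ContDiffAt ℝ s Real.Gamma a ∧
    MeasureTheory.IntegrableOn
      (fun t : ℝ => t ^ (a - 1) * Real.log t ^ s * Real.exp (-t)) (Set.Ioi 0) ∧
    iteratedDeriv s Real.Gamma a
      = ∫ t in Set.Ioi (0 : ℝ), t ^ (a - 1) * Real.log t ^ s * Real.exp (-t) := by
  refine ⟨?_, GammaDeriv.integrableOn_G s ha, GammaDeriv.iteratedDeriv_Gamma s a ha⟩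
  refine ((GammaDeriv.contDiffOn_G s 0).contDiffAt (Ioi_mem_nhds ha)).congr_of_eventuallyEq ?_
  filter_upwards [Ioi_mem_nhds ha] with y hy using GammaDeriv.Gamma_eq_G hy
end

section
/- Let $a > 0$ be a rational number and $s \geq 0$ an integer. Then for every real $z > 0$: $\Gamma^{(s)}(a) = \sum_{k=0}^{s} \frac{(-1)^k\, s!}{(s-k)!}\, z^{a} (\log z)^{s-k}\, E_{a,k+1}(-z) \;+\; z^{a-1} e^{-z} \sum_{k=0}^{s} \binom{s}{k} (\log z)^{s-k} \int_0^{\infty} \left(1 + \frac{t}{z}\right)^{a-1} \left(\log\left(1 + \frac{t}{z}\right)\right)^{k} e^{-t}\,dt$, where all integrals involved converge. -/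
open MeasureTheory ProbabilityTheory Set Filter Topology

/-! ### Derivatives of Gamma as integrals -/

/-- The measure with density `x⁻¹ e^{-x}` on `(0, ∞)`; the moment generating function of `log` under this
infinite measure is the Gamma function. -/
noncomputable def gammaHaar : Measure ℝ :=
  (volume.restrict (Ioi 0)).withDensity
    (fun x => ((Real.toNNReal (Real.exp (-x) * x⁻¹) : NNReal) : ENNReal))

/-- The integrand `x^{a-1} (log x)^s e^{-x}` of the `s`-th derivative of Gamma at `a`. -/
noncomputable def gammaKernel (a : ℝ) (s : ℕ) (x : ℝ) : ℝ :=
  x ^ (a - 1) * Real.log x ^ s * Real.exp (-x)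

lemma measurable_gammaHaar_density :
    Measurable (fun x : ℝ => Real.toNNReal (Real.exp (-x) * x⁻¹)) := by
  fun_prop

lemma density_smul_eq_gammaKernel (a : ℝ) (s : ℕ) {x : ℝ} (hx : 0 < x) :
    Real.toNNReal (Real.exp (-x) * x⁻¹) • (Real.log x ^ s * Real.exp (a * Real.log x))
      = gammaKernel a s x := by
  have h : 0 ≤ Real.exp (-x) * x⁻¹ := by positivity
  rw [NNReal.smul_def, Real.coe_toNNReal _ h, gammaKernel, Real.rpow_sub_one hx.ne',
    Real.rpow_def_of_pos hx, smul_eq_mul, mul_comm a]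
  ring

lemma integrable_gammaHaar_iff (a : ℝ) (s : ℕ) :
    Integrable (fun x => Real.log x ^ s * Real.exp (a * Real.log x)) gammaHaar ↔
      IntegrableOn (gammaKernel a s) (Ioi 0) := by
  rw [gammaHaar, integrable_withDensity_iff_integrable_smul measurable_gammaHaar_density]
  exact integrableOn_congr_fun
    (fun x hx => density_smul_eq_gammaKernel a s hx) measurableSet_Ioi

lemma integral_gammaHaar (a : ℝ) (s : ℕ) :
    ∫ x, Real.log x ^ s * Real.exp (a * Real.log x) ∂gammaHaar
      = ∫ x in Ioi 0, gammaKernel a s x := by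
  rw [gammaHaar, integral_withDensity_eq_integral_smul measurable_gammaHaar_density]
  exact setIntegral_congr_fun measurableSet_Ioi
    (fun x hx => density_smul_eq_gammaKernel a s hx)

lemma mem_interior_integrableExpSet {a : ℝ} (ha : 0 < a) :
    a ∈ interior (integrableExpSet Real.log gammaHaar) := by
  refine mem_interior.2 ⟨Ioi 0, fun b hb => ?_, isOpen_Ioi, ha⟩
  have := (integrable_gammaHaar_iff b 0).2 <| by
    refine (Real.GammaIntegral_convergent hb).congr_fun (fun x _ => ?_) measurableSet_Ioi
    simp [gammaKernel, mul_comm]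
  simpa [integrableExpSet] using this

lemma integrableOn_gammaKernel {a : ℝ} (ha : 0 < a) (s : ℕ) :
    IntegrableOn (gammaKernel a s) (Ioi 0) :=
  (integrable_gammaHaar_iff a s).1
    (integrable_pow_mul_exp_of_mem_interior_integrableExpSet (mem_interior_integrableExpSet ha) s)

lemma iteratedDeriv_Gamma_eq_integral {a : ℝ} (ha : 0 < a) (s : ℕ) :
    iteratedDeriv s Real.Gamma a = ∫ x in Ioi 0, gammaKernel a s x := by
  rw [← integral_gammaHaar, ← iteratedDeriv_mgf (mem_interior_integrableExpSet ha)]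
  refine Filter.EventuallyEq.iteratedDeriv_eq s ?_
  filter_upwards [Ioi_mem_nhds ha] with b hb
  have := integral_gammaHaar b 0
  simp only [pow_zero, one_mul] at this
  rw [mgf, this, Real.Gamma_eq_integral hb]
  simp [gammaKernel, mul_comm]

/-! ### The integral of `x^{b-1} (log x)^s` over `(0, z]` -/

/-- The antiderivative of `x^{b-1} (log x)^s` obtained by repeated integration by parts. -/
noncomputable def powLogPrimitive (b : ℝ) (s : ℕ) (x : ℝ) : ℝ :=
  ∑ k ∈ Finset.range (s + 1), ((-1 : ℝ) ^ k * s.factorial / (s - k).factorial)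
    * (x ^ b * Real.log x ^ (s - k) / b ^ (k + 1))

lemma powLogPrimitive_succ (b : ℝ) (s : ℕ) (x : ℝ) :
    powLogPrimitive b (s + 1) x
      = x ^ b * Real.log x ^ (s + 1) / b - (s + 1) / b * powLogPrimitive b s x := by
  rw [powLogPrimitive, Finset.sum_range_succ', powLogPrimitive, Finset.mul_sum, add_comm,
    sub_eq_add_neg, ← Finset.sum_neg_distrib]
  congr 1
  · have : ((s + 1).factorial : ℝ) ≠ 0 := by positivity
    simp [this]
  · refine Finset.sum_congr rfl fun k _ => ?_
    rw [Nat.add_sub_add_right, Nat.factorial_succ]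
    push_cast
    simp only [div_eq_mul_inv, pow_succ, mul_inv]
    ring

lemma hasDerivAt_powLogPrimitive {b : ℝ} (hb : 0 < b) (s : ℕ) {x : ℝ} (hx : 0 < x) :
    HasDerivAt (powLogPrimitive b s) (x ^ (b - 1) * Real.log x ^ s) x := by
  have h1 : HasDerivAt (fun x : ℝ => x ^ b) (b * x ^ (b - 1)) x :=
    Real.hasDerivAt_rpow_const (Or.inl hx.ne')
  induction s with
  | zero =>
    have : powLogPrimitive b 0 = fun x => x ^ b / b := by
      ext y; simp [powLogPrimitive]
    rw [this]
    refine (h1.div_const b).congr_deriv ?_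
    simp [hb.ne']
  | succ s ih =>
    have : powLogPrimitive b (s + 1) = fun x =>
        x ^ b * Real.log x ^ (s + 1) / b - (s + 1) / b * powLogPrimitive b s x := by
      ext y; exact powLogPrimitive_succ b s y
    rw [this]
    refine (((h1.mul ((Real.hasDerivAt_log hx.ne').pow (s + 1))).div_const b).sub
      (ih.const_mul ((s + 1 : ℝ) / b))).congr_deriv ?_
    have : x ^ b = x ^ (b - 1) * x := by rw [Real.rpow_sub_one hx.ne']; field_simp
    rw [this]
    simp
    field_simp
    ring

lemma tendsto_rpow_mul_log_pow {b : ℝ} (hb : 0 < b) (s : ℕ) :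
    Tendsto (fun x : ℝ => x ^ b * Real.log x ^ s) (𝓝[>] 0) (𝓝 0) := by
  have h := (isLittleO_abs_log_rpow_rpow_nhdsGT_zero (s : ℝ)
    (neg_lt_zero.2 hb)).tendsto_div_nhds_zero
  refine squeeze_zero_norm' ?_ h
  filter_upwards [self_mem_nhdsWithin] with x hx
  have hx : 0 < x := hx
  rw [Real.rpow_neg hx.le, div_inv_eq_mul, norm_mul, norm_pow, Real.norm_eq_abs, Real.norm_eq_abs,
    abs_of_pos (Real.rpow_pos_of_pos hx b), Real.rpow_natCast, mul_comm]

lemma tendsto_powLogPrimitive {b : ℝ} (hb : 0 < b) (s : ℕ) :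
    Tendsto (powLogPrimitive b s) (𝓝[>] 0) (𝓝 0) := by
  have : Tendsto (powLogPrimitive b s) (𝓝[>] 0) (𝓝 (∑ k ∈ Finset.range (s + 1),
      ((-1 : ℝ) ^ k * s.factorial / (s - k).factorial) * (0 / b ^ (k + 1)))) :=
    tendsto_finsetSum _ fun k _ =>
      ((tendsto_rpow_mul_log_pow hb (s - k)).div_const _).const_mul _
  simpa using this

/-- On `(0, z]` the factor `e^{-x}` is at least `e^{-z}`, so integrability is inherited from the
Gamma integrand. -/
lemma integrableOn_rpow_mul_log_pow {b : ℝ} (hb : 0 < b) (s : ℕ) (z : ℝ) :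
    IntegrableOn (fun x : ℝ => x ^ (b - 1) * Real.log x ^ s) (Ioc 0 z) := by
  have h := (integrableOn_gammaKernel hb s).mono_set (Ioc_subset_Ioi_self : Ioc 0 z ⊆ Ioi 0)
  refine (h.const_mul (Real.exp z)).mono (by fun_prop) ?_
  filter_upwards [ae_restrict_mem measurableSet_Ioc] with x hx
  rw [gammaKernel, mul_left_comm, ← Real.exp_add,
    norm_mul (x ^ (b - 1) * Real.log x ^ s) (Real.exp (z + -x))]
  refine le_mul_of_one_le_right (norm_nonneg _) ?_
  rw [Real.norm_of_nonneg (Real.exp_pos _).le]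
  exact Real.one_le_exp (by linarith [hx.2])

lemma integral_rpow_mul_log_pow_s7 {b : ℝ} (hb : 0 < b) (s : ℕ) {z : ℝ} (hz : 0 < z) :
    ∫ x in Ioc 0 z, x ^ (b - 1) * Real.log x ^ s = powLogPrimitive b s z := by
  rw [← intervalIntegral.integral_of_le hz.le,
    intervalIntegral.integral_eq_sub_of_hasDerivAt_of_tendsto hz
      (fun x hx => hasDerivAt_powLogPrimitive hb s hx.1)
      ((intervalIntegrable_iff_integrableOn_Ioc_of_le hz.le).2
        (integrableOn_rpow_mul_log_pow hb s z))
      (tendsto_powLogPrimitive hb s)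
      (hasDerivAt_powLogPrimitive hb s hz).continuousAt.continuousWithinAt.tendsto, sub_zero]

/-! ### The integral over `(0, z]` as a power series -/

lemma hasSum_Ereal {a : ℝ} (ha : 0 < a) (j : ℕ) (z : ℝ) :
    HasSum (fun n : ℕ => z ^ n / (n.factorial * ((n : ℝ) + a) ^ j)) (Ereal a j z) := by
  refine Summable.hasSum ?_
  refine Summable.of_norm_bounded
    ((Real.summable_pow_div_factorial |z|).mul_right (a ^ j)⁻¹) fun n => ?_
  have hn : (0 : ℝ) ≤ n := n.cast_nonneg
  rw [← div_eq_mul_inv, div_div, norm_div, norm_pow, Real.norm_eq_abs,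
    Real.norm_of_nonneg (by positivity)]
  gcongr
  linarith

/-- Termwise integration of the exponential series on `(0, z]`. -/
lemma hasSum_integral_gammaKernel {a : ℝ} (ha : 0 < a) (s : ℕ) {z : ℝ} (hz : 0 < z) :
    HasSum (fun n : ℕ => (-1 : ℝ) ^ n / n.factorial * powLogPrimitive (n + a) s z)
      (∫ x in Ioc 0 z, gammaKernel a s x) := by
  let F : ℕ → ℝ → ℝ := fun n x =>
    (-1 : ℝ) ^ n / n.factorial * (x ^ ((n + a) - 1) * Real.log x ^ s)
  have hint (n : ℕ) : IntegrableOn (F n) (Ioc 0 z) :=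
    (integrableOn_rpow_mul_log_pow (by positivity) s z).const_mul _
  have hpow (n : ℕ) {x : ℝ} (hx : 0 < x) : x ^ ((n + a) - 1) = x ^ n * x ^ (a - 1) := by
    rw [add_sub_assoc, Real.rpow_add hx, Real.rpow_natCast]
  have hsum : Summable fun n => ∫ x in Ioc 0 z, ‖F n x‖ := by
    refine Summable.of_nonneg_of_le (fun n => integral_nonneg fun x => norm_nonneg _) (fun n => ?_)
      ((Real.summable_pow_div_factorial z).mul_right
        (∫ x in Ioc 0 z, ‖x ^ (a - 1) * Real.log x ^ s‖))
    rw [← integral_const_mul]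
    refine setIntegral_mono_on (hint n).norm
      ((integrableOn_rpow_mul_log_pow ha s z).norm.const_mul _) measurableSet_Ioc fun x hx => ?_
    simp only [F]
    rw [hpow n hx.1, mul_assoc, ← mul_assoc, norm_mul]
    gcongr
    rw [norm_mul, norm_div, norm_pow, norm_neg, norm_one, one_pow, norm_pow,
      Real.norm_of_nonneg hx.1.le, Real.norm_of_nonneg (Nat.cast_nonneg _), one_div_mul_eq_div]
    gcongr
    · exact hx.1.le
    · exact hx.2
  have key := hasSum_integral_of_summable_integral_norm hint hsum
  have hterm : (fun n : ℕ => (-1 : ℝ) ^ n / n.factorial * powLogPrimitive (n + a) s z)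
      = fun n => ∫ x in Ioc 0 z, F n x := by
    ext n
    simp only [F]
    rw [integral_const_mul, integral_rpow_mul_log_pow_s7 (by positivity) s hz]
  have htotal : ∫ x in Ioc 0 z, gammaKernel a s x = ∫ x in Ioc 0 z, ∑' n, F n x := by
    refine setIntegral_congr_fun measurableSet_Ioc fun x hx => ?_
    have he : HasSum (fun n : ℕ => (-x) ^ n / n.factorial) (Real.exp (-x)) := by
      rw [Real.exp_eq_exp_ℝ]
      exact NormedSpace.expSeries_div_hasSum_exp (-x)
    simp only [gammaKernel]
    rw [← (he.mul_left (x ^ (a - 1) * Real.log x ^ s)).tsum_eq]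
    refine tsum_congr fun n => ?_
    simp only [F]
    rw [hpow n hx.1, neg_pow]
    ring
  rw [hterm, htotal]
  exact key

lemma integral_Ioc_gammaKernel {a : ℝ} (ha : 0 < a) (s : ℕ) {z : ℝ} (hz : 0 < z) :
    ∫ x in Ioc 0 z, gammaKernel a s x
      = ∑ k ∈ Finset.range (s + 1), ((-1 : ℝ) ^ k * s.factorial / (s - k).factorial)
          * z ^ a * Real.log z ^ (s - k) * Ereal a (k + 1) (-z) := by
  refine (hasSum_integral_gammaKernel ha s hz).unique ?_
  have h := hasSum_sum (s := Finset.range (s + 1)) fun k _ =>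
    (hasSum_Ereal ha (k + 1) (-z)).mul_left
      (((-1 : ℝ) ^ k * s.factorial / (s - k).factorial) * z ^ a * Real.log z ^ (s - k))
  convert! h using 2 with n
  rw [powLogPrimitive, Finset.mul_sum]
  refine Finset.sum_congr rfl fun k _ => ?_
  rw [Real.rpow_add hz, Real.rpow_natCast, neg_pow z]
  simp only [div_eq_mul_inv, mul_inv]
  ring

/-! ### The integral over `(z, ∞)` -/

/-- The shifted and normalised tail integrand `(1 + t/z)^{a-1} (log (1 + t/z))^k e^{-t}`. -/
noncomputable def tailKernel (a z : ℝ) (k : ℕ) (t : ℝ) : ℝ :=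
  (1 + t / z) ^ (a - 1) * Real.log (1 + t / z) ^ k * Real.exp (-t)

lemma preimage_add_Ioi (z : ℝ) : (fun t : ℝ => z + t) ⁻¹' Ioi z = Ioi 0 := by
  ext t; simp

lemma integrableOn_gammaKernel_shift {a : ℝ} (ha : 0 < a) (s : ℕ) {z : ℝ} (hz : 0 < z) :
    IntegrableOn (fun t => gammaKernel a s (z + t)) (Ioi 0) := by
  have h := ((measurePreserving_add_left volume z).integrableOn_comp_preimage
    (measurableEmbedding_addLeft z)).2
      ((integrableOn_gammaKernel ha s).mono_set (Ioi_subset_Ioi hz.le))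
  rwa [preimage_add_Ioi] at h

lemma integral_gammaKernel_shift (a : ℝ) (s : ℕ) (z : ℝ) :
    ∫ t in Ioi 0, gammaKernel a s (z + t) = ∫ x in Ioi z, gammaKernel a s x := by
  have h := (measurePreserving_add_left volume z).setIntegral_preimage_emb
    (measurableEmbedding_addLeft z) (gammaKernel a s) (Ioi z)
  rwa [preimage_add_Ioi] at h

lemma add_eq_mul_one_add_div {z : ℝ} (hz : 0 < z) (t : ℝ) : z + t = z * (1 + t / z) := by
  field_simp

lemma integrableOn_tailKernel {a : ℝ} (ha : 0 < a) {z : ℝ} (hz : 0 < z) (k : ℕ) :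
    IntegrableOn (tailKernel a z k) (Ioi 0) := by
  -- `log (1 + t/z) = log (z + t) - log z`, expanded by the binomial theorem
  have h : IntegrableOn (fun t => ∑ m ∈ Finset.range (k + 1),
      (z ^ (a - 1))⁻¹ * Real.exp z * ((-Real.log z) ^ (k - m) * k.choose m)
        * gammaKernel a m (z + t)) (Ioi 0) :=
    integrable_finsetSum _ fun m _ => (integrableOn_gammaKernel_shift ha m hz).const_mul _
  refine h.congr_fun (fun t ht => ?_) measurableSet_Ioi
  have ht : 0 < t := ht
  have h1 : 0 < 1 + t / z := by positivity
  have hz' : z ^ (a - 1) ≠ 0 := (Real.rpow_pos_of_pos hz _).ne'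
  have hlog : Real.log (1 + t / z) = Real.log (z + t) + -Real.log z := by
    rw [add_eq_mul_one_add_div hz, Real.log_mul hz.ne' h1.ne']; ring
  have hexp : Real.exp (-t) = Real.exp z * Real.exp (-(z + t)) := by
    rw [← Real.exp_add]; ring_nf
  have hp : (1 + t / z) ^ (a - 1) = (z ^ (a - 1))⁻¹ * (z + t) ^ (a - 1) := by
    rw [add_eq_mul_one_add_div hz, Real.mul_rpow hz.le h1.le]; field_simp
  simp only [tailKernel, gammaKernel]
  rw [hlog, hexp, hp, add_pow, Finset.mul_sum, Finset.sum_mul]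
  refine Finset.sum_congr rfl fun m _ => ?_
  ring

lemma integral_Ioi_gammaKernel {a : ℝ} (ha : 0 < a) (s : ℕ) {z : ℝ} (hz : 0 < z) :
    ∫ x in Ioi z, gammaKernel a s x
      = z ^ (a - 1) * Real.exp (-z) * ∑ k ∈ Finset.range (s + 1),
          (s.choose k : ℝ) * Real.log z ^ (s - k) * ∫ t in Ioi 0, tailKernel a z k t := by
  rw [← integral_gammaKernel_shift]
  simp_rw [← integral_const_mul]
  rw [← integral_finsetSum _ fun k _ => (integrableOn_tailKernel ha hz k).const_mul _,
    ← integral_const_mul]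
  refine setIntegral_congr_fun measurableSet_Ioi fun t ht => ?_
  have ht : 0 < t := ht
  have h1 : 0 < 1 + t / z := by positivity
  have hlog : Real.log (z + t) = Real.log (1 + t / z) + Real.log z := by
    rw [add_eq_mul_one_add_div hz, Real.log_mul hz.ne' h1.ne']; ring
  have hp : (z + t) ^ (a - 1) = z ^ (a - 1) * (1 + t / z) ^ (a - 1) := by
    rw [add_eq_mul_one_add_div hz, Real.mul_rpow hz.le h1.le]
  simp only [tailKernel, gammaKernel]
  rw [hlog, hp, neg_add, Real.exp_add, add_pow, Finset.mul_sum, Finset.mul_sum, Finset.sum_mul]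
  refine Finset.sum_congr rfl fun m _ => ?_
  ring

/-! ### Splitting at `z` -/

theorem stmt7 (a : ℚ) (ha : 0 < a) (s : ℕ) :
    ∀ z : ℝ, 0 < z →
      (∀ k ≤ s, MeasureTheory.IntegrableOn
        (fun t : ℝ => (1 + t / z) ^ ((a : ℝ) - 1) * Real.log (1 + t / z) ^ k * Real.exp (-t))
        (Set.Ioi 0)) ∧
      iteratedDeriv s Real.Gamma (a : ℝ)
        = (∑ k ∈ Finset.range (s + 1),
            ((-1 : ℝ) ^ k * s.factorial / (s - k).factorial)
              * z ^ (a : ℝ) * Real.log z ^ (s - k) * Ereal (a : ℝ) (k + 1) (-z))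
          + z ^ ((a : ℝ) - 1) * Real.exp (-z) * ∑ k ∈ Finset.range (s + 1),
              (s.choose k : ℝ) * Real.log z ^ (s - k) *
                ∫ t in Set.Ioi (0 : ℝ),
                  (1 + t / z) ^ ((a : ℝ) - 1) * Real.log (1 + t / z) ^ k * Real.exp (-t) := by
  intro z hz
  have ha' : (0 : ℝ) < a := by exact_mod_cast ha
  refine ⟨fun k _ => integrableOn_tailKernel ha' hz k, ?_⟩
  have hI := integrableOn_gammaKernel ha' s
  have hsplit : ∫ x in Ioi 0, gammaKernel a s x
      = (∫ x in Ioc 0 z, gammaKernel a s x) + ∫ x in Ioi z, gammaKernel a s x := by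
    rw [← setIntegral_union (Ioc_disjoint_Ioi le_rfl) measurableSet_Ioi
      (hI.mono_set Ioc_subset_Ioi_self) (hI.mono_set (Ioi_subset_Ioi hz.le)),
      Ioc_union_Ioi_eq_Ioi hz.le]
  rw [iteratedDeriv_Gamma_eq_integral ha', hsplit, integral_Ioc_gammaKernel ha' s hz,
    integral_Ioi_gammaKernel ha' s hz]
  rfl
end

section
/- Let $a > 0$ be a rational number and $s \geq 0$ an integer. Then $\Gamma^{(s)}(a) = (-1)^s\, s!\; E_{a,s+1}(-1) \;+\; e^{-1} \int_0^{\infty} (1+t)^{a-1} \left(\log(1+t)\right)^{s} e^{-t}\,dt$, the integral being convergent. -/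
open MeasureTheory Set Filter Topology

/-- The integrand of the upper part of the `s`-th derivative of the Gamma integral at `x`, before
the translation `t ↦ 1 + t`; it is integrated over `(1, ∞)`. -/
noncomputable def upperIntegrand (s : ℕ) (x t : ℝ) : ℝ :=
  t ^ (x - 1) * Real.log t ^ s * Real.exp (-t)

lemma continuousOn_upperIntegrand (s : ℕ) (x : ℝ) :
    ContinuousOn (upperIntegrand s x) (Ioi 1) := by
  intro t ht
  have h0 : t ≠ 0 := by have : (1 : ℝ) < t := ht; positivity
  unfold upperIntegrand
  refine ContinuousAt.continuousWithinAt ?_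
  exact ((Real.continuousAt_rpow_const t _ (Or.inl h0)).mul
    ((Real.continuousAt_log h0).pow s)).mul (by fun_prop)

lemma aestronglyMeasurable_upperIntegrand (s : ℕ) (x : ℝ) :
    AEStronglyMeasurable (upperIntegrand s x) (volume.restrict (Ioi 1)) :=
  (continuousOn_upperIntegrand s x).aestronglyMeasurable measurableSet_Ioi

/-- Since `log t ≤ t`, the logarithmic powers are absorbed into a larger power of `t`; the bound is
uniform for exponents below `y`, and it is the integrand of a Gamma integral. -/
lemma norm_upperIntegrand_le (s : ℕ) {x y t : ℝ} (hxy : x ≤ y) (ht : 1 < t) :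
    ‖upperIntegrand s x t‖ ≤ Real.exp (-t) * t ^ ((|y| + s + 1) - 1) := by
  have h0 : 0 < t := by linarith
  have hl : 0 ≤ Real.log t := Real.log_nonneg ht.le
  have h1 : t ^ (x - 1) ≤ t ^ |y| :=
    Real.rpow_le_rpow_of_exponent_le ht.le (by have := le_abs_self y; linarith)
  have h2 : Real.log t ^ s ≤ t ^ s := by
    gcongr
    have := Real.log_le_sub_one_of_pos h0
    linarith
  have h3 : t ^ ((|y| + s + 1) - 1) = t ^ |y| * t ^ s := by
    rw [add_sub_cancel_right, Real.rpow_add h0, Real.rpow_natCast]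
  rw [h3, upperIntegrand, Real.norm_of_nonneg (by positivity), mul_comm]
  gcongr

lemma integrableOn_upperBound (s : ℕ) (y : ℝ) :
    IntegrableOn (fun t : ℝ => Real.exp (-t) * t ^ ((|y| + s + 1) - 1)) (Ioi 1) :=
  (Real.GammaIntegral_convergent (by positivity)).mono_set (Ioi_subset_Ioi zero_le_one)

lemma integrableOn_upperIntegrand (s : ℕ) (x : ℝ) :
    IntegrableOn (upperIntegrand s x) (Ioi 1) := by
  refine (integrableOn_upperBound s x).mono' (aestronglyMeasurable_upperIntegrand s x) ?_
  filter_upwards [ae_restrict_mem measurableSet_Ioi] with t ht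
  exact norm_upperIntegrand_le s le_rfl ht

lemma hasDerivAt_integral_upperIntegrand (s : ℕ) (x : ℝ) :
    HasDerivAt (fun y => ∫ t in Ioi 1, upperIntegrand s y t)
      (∫ t in Ioi 1, upperIntegrand (s + 1) x t) x := by
  refine (hasDerivAt_integral_of_dominated_loc_of_deriv_le
    (Iio_mem_nhds (lt_add_one x))
    (Eventually.of_forall fun y => aestronglyMeasurable_upperIntegrand s y)
    (integrableOn_upperIntegrand s x) (aestronglyMeasurable_upperIntegrand (s + 1) x)
    ?_ (integrableOn_upperBound (s + 1) (x + 1)) ?_).2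
  · filter_upwards [ae_restrict_mem measurableSet_Ioi] with t ht y hy
    exact norm_upperIntegrand_le (s + 1) (le_of_lt hy) ht
  · filter_upwards [ae_restrict_mem measurableSet_Ioi] with t ht y _
    have h0 : (0 : ℝ) < t := lt_trans one_pos ht
    have h := (((hasDerivAt_id y).sub_const 1).const_rpow h0).mul_const (Real.log t ^ s)
    have h' := h.mul_const (Real.exp (-t))
    unfold upperIntegrand
    convert! h' using 1
    simp only [id]
    ring

lemma hasDerivAt_Ereal (j : ℕ) {x : ℝ} (hx : 0 < x) :
    HasDerivAt (fun y => Ereal y j (-1)) (-(j : ℝ) * Ereal x (j + 1) (-1)) x := by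
  have hsum : ∀ c d : ℝ, Summable fun n : ℕ => c * (d ^ n / (n.factorial : ℝ)) := fun c d =>
    (Real.summable_pow_div_factorial d).mul_left c
  unfold Ereal
  rw [← tsum_mul_left]
  refine hasDerivAt_tsum_of_isPreconnected
    (u := fun n : ℕ => (j / (x / 2) ^ (j + 1)) * ((1 : ℝ) ^ n / (n.factorial : ℝ)))
    (t := Ioi (x / 2)) (y₀ := x)
    (g' := fun n y => -(j : ℝ) * ((-1) ^ n / (n.factorial * ((n : ℝ) + y) ^ (j + 1))))
    (hsum _ _) isOpen_Ioi isPreconnected_Ioi ?_ ?_ ?_ ?_ ?_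
  · intro n y hy
    have hy0 : 0 < y := lt_trans (half_pos hx) hy
    have hp : (0 : ℝ) < n + y := by positivity
    have hf : (n.factorial : ℝ) ≠ 0 := by positivity
    have h := ((((hasDerivAt_id y).const_add (n : ℝ)).pow j).const_mul
      (n.factorial : ℝ)).inv (by simp only [id, Pi.pow_apply]; positivity)
    have h' := h.const_mul ((-1 : ℝ) ^ n)
    convert! h' using 1
    rcases j with _ | j
    · simp
    · simp only [id, Pi.pow_apply, Nat.add_sub_cancel]
      field_simp
      ring
  · intro n y hy
    have hy' : x / 2 < y := hy
    have hy0 : 0 < y := lt_trans (half_pos hx) hy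
    have hx2 : 0 < x / 2 := half_pos hx
    have hle : x / 2 ≤ n + y := by
      have : (0 : ℝ) ≤ n := n.cast_nonneg
      linarith
    rw [norm_mul, norm_div, norm_pow, norm_neg, norm_neg, norm_one, one_pow,
      Real.norm_of_nonneg (by positivity), Real.norm_of_nonneg (by positivity), one_div,
      mul_inv, div_eq_mul_inv, one_div, mul_assoc, mul_comm ((n.factorial : ℝ)⁻¹)]
    gcongr
  · exact half_lt_self hx
  · refine Summable.of_norm_bounded (hsum (1 / x ^ j) 1) fun n => ?_
    rw [norm_div, norm_pow, norm_neg, norm_one, one_pow,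
      Real.norm_of_nonneg (by positivity), one_div, one_div, one_div, mul_inv,
      mul_comm ((n.factorial : ℝ)⁻¹)]
    gcongr
    have : (0 : ℝ) ≤ n := n.cast_nonneg
    linarith
  · exact half_lt_self hx

/-- Expanding `exp (-t)` and integrating `t ^ (n + x - 1)` term by term over `(0, 1]`. -/
lemma integral_Ioc_eq_Ereal {x : ℝ} (hx : 0 < x) :
    ∫ t in Ioc (0 : ℝ) 1, Real.exp (-t) * t ^ (x - 1) = Ereal x 1 (-1) := by
  have hint : ∀ n : ℕ, ∫ t in Ioc (0 : ℝ) 1, t ^ ((n : ℝ) + x - 1) = ((n : ℝ) + x)⁻¹ := by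
    intro n
    have hp : (0 : ℝ) < n + x := by positivity
    rw [← intervalIntegral.integral_of_le zero_le_one, integral_rpow (Or.inl (by linarith))]
    rw [sub_add_cancel, Real.one_rpow, Real.zero_rpow hp.ne', sub_zero, one_div]
  have hI : ∀ n : ℕ, IntegrableOn (fun t : ℝ => t ^ ((n : ℝ) + x - 1)) (Ioc 0 1) := by
    intro n
    have hp : (0 : ℝ) < n + x := by positivity
    exact (intervalIntegrable_iff_integrableOn_Ioc_of_le zero_le_one).mp
      (intervalIntegral.intervalIntegrable_rpow' (by linarith))
  let F : ℕ → ℝ → ℝ := fun n t => ((-1) ^ n / (n.factorial : ℝ)) * t ^ ((n : ℝ) + x - 1)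
  have hnorm : ∀ n, ∫ t in Ioc (0 : ℝ) 1, ‖F n t‖ = (1 / (n.factorial : ℝ)) * ((n : ℝ) + x)⁻¹ := by
    intro n
    rw [← hint, ← integral_const_mul]
    refine setIntegral_congr_fun measurableSet_Ioc fun t ht => ?_
    have h0 : 0 < t := ht.1
    simp only [F]
    rw [norm_mul, norm_div, norm_pow, norm_neg, norm_one, one_pow,
      Real.norm_of_nonneg (by positivity), Real.norm_of_nonneg (by positivity)]
  have hs : Summable fun n => ∫ t in Ioc (0 : ℝ) 1, ‖F n t‖ := by
    simp only [hnorm]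
    refine Summable.of_nonneg_of_le (fun n => by positivity) (fun n => ?_)
      ((Real.summable_pow_div_factorial 1).mul_right x⁻¹)
    rw [one_pow]
    gcongr
    have : (0 : ℝ) ≤ n := n.cast_nonneg
    linarith
  have H := hasSum_integral_of_summable_integral_norm
    (μ := volume.restrict (Ioc (0 : ℝ) 1)) (F := F) (fun n => (hI n).const_mul _) hs
  have hL : ∀ n, ∫ t in Ioc (0 : ℝ) 1, F n t
      = (-1) ^ n / (n.factorial * ((n : ℝ) + x) ^ 1) := by
    intro n
    simp only [F]
    rw [integral_const_mul, hint, pow_one, div_mul_eq_div_div, div_eq_mul_inv _ ((n : ℝ) + x)]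
  rw [Ereal, ← tsum_congr hL, H.tsum_eq]
  refine setIntegral_congr_fun measurableSet_Ioc fun t ht => ?_
  have h0 : 0 < t := ht.1
  have he : Real.exp (-t) = ∑' n : ℕ, (-t) ^ n / (n.factorial : ℝ) := by
    rw [Real.exp_eq_exp_ℝ, NormedSpace.exp_eq_tsum_div]
  simp only [F]
  rw [he, ← tsum_mul_right]
  refine tsum_congr fun n => ?_
  rw [add_sub_assoc, Real.rpow_add h0, Real.rpow_natCast, neg_pow t]
  ring

lemma Gamma_eq_Ereal_add {x : ℝ} (hx : 0 < x) :
    Real.Gamma x = Ereal x 1 (-1) + ∫ t in Ioi 1, upperIntegrand 0 x t := by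
  have hG := Real.GammaIntegral_convergent hx
  rw [Real.Gamma_eq_integral hx, ← Ioc_union_Ioi_eq_Ioi (zero_le_one (α := ℝ)),
    setIntegral_union (Ioc_disjoint_Ioi le_rfl) measurableSet_Ioi
      (hG.mono_set Ioc_subset_Ioi_self) (hG.mono_set (Ioi_subset_Ioi zero_le_one)),
    integral_Ioc_eq_Ereal hx]
  congr 1
  refine setIntegral_congr_fun measurableSet_Ioi fun t _ => ?_
  simp [upperIntegrand, mul_comm]

lemma iteratedDeriv_Gamma (s : ℕ) : ∀ {x : ℝ}, 0 < x →
    iteratedDeriv s Real.Gamma x = (-1 : ℝ) ^ s * s.factorial * Ereal x (s + 1) (-1)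
      + ∫ t in Ioi 1, upperIntegrand s x t := by
  induction s with
  | zero =>
    intro x hx
    simp [Gamma_eq_Ereal_add hx]
  | succ s ih =>
    intro x hx
    have hev : iteratedDeriv s Real.Gamma =ᶠ[𝓝 x] fun y =>
        (-1 : ℝ) ^ s * s.factorial * Ereal y (s + 1) (-1) + ∫ t in Ioi 1, upperIntegrand s y t := by
      filter_upwards [Ioi_mem_nhds hx] with y hy using ih hy
    rw [iteratedDeriv_succ, hev.deriv_eq,
      (((hasDerivAt_Ereal (s + 1) hx).const_mul ((-1 : ℝ) ^ s * s.factorial)).fun_add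
        (hasDerivAt_integral_upperIntegrand s x)).deriv, Nat.factorial_succ]
    push_cast
    ring

/-- The stated integrand is `e` times the translate of `upperIntegrand` by `1`. -/
lemma integrand_eq (s : ℕ) (x t : ℝ) :
    (1 + t) ^ (x - 1) * Real.log (1 + t) ^ s * Real.exp (-t)
      = Real.exp 1 * upperIntegrand s x (1 + t) := by
  have : Real.exp (-t) = Real.exp 1 * Real.exp (-(1 + t)) := by
    rw [← Real.exp_add]
    congr 1
    ring
  rw [upperIntegrand, this]
  ring

lemma preimage_one_add_Ioi : (fun t : ℝ => 1 + t) ⁻¹' Ioi 1 = Ioi 0 := by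
  ext t
  simp

theorem stmt8 (a : ℚ) (ha : 0 < a) (s : ℕ) :
    MeasureTheory.IntegrableOn
      (fun t : ℝ => (1 + t) ^ ((a : ℝ) - 1) * Real.log (1 + t) ^ s * Real.exp (-t))
      (Set.Ioi 0) ∧
    iteratedDeriv s Real.Gamma (a : ℝ)
      = (-1 : ℝ) ^ s * s.factorial * Ereal (a : ℝ) (s + 1) (-1)
        + (Real.exp 1)⁻¹ *
            ∫ t in Set.Ioi (0 : ℝ),
              (1 + t) ^ ((a : ℝ) - 1) * Real.log (1 + t) ^ s * Real.exp (-t) := by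
  have hmp : MeasurePreserving (fun t : ℝ => 1 + t) := measurePreserving_add_left volume 1
  have hme : MeasurableEmbedding (fun t : ℝ => 1 + t) := measurableEmbedding_addLeft 1
  simp only [integrand_eq]
  rw [integral_const_mul, inv_mul_cancel_left₀ (Real.exp_pos 1).ne', ← preimage_one_add_Ioi,
    hmp.setIntegral_preimage_emb hme]
  exact ⟨((hmp.integrableOn_comp_preimage hme).mpr
    (integrableOn_upperIntegrand s a)).const_mul _, iteratedDeriv_Gamma s (by exact_mod_cast ha)⟩
end

section
/- Euler's constant $\gamma = -\Gamma'(1)$ satisfies $\gamma = \sum_{n=0}^{\infty} \frac{(-1)^n}{n!\,(n+1)^2} \;-\; e^{-1} \int_0^{\infty} \log(1+t)\, e^{-t}\,dt$, the integral being convergent. -/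
/-!
Differentiating the Gamma integral under the integral sign gives
`Γ'(1) = ∫ t in (0, ∞), log t * exp (-t)`, and this integral is split at `t = 1`.

On `(1, ∞)` the translation `t ↦ 1 + t` turns it into
`e⁻¹ * ∫ t in (0, ∞), log (1 + t) * exp (-t)` (`integral_log_mul_exp_Ioi_one`).
On `(0, 1]` the exponential series is integrated term by term, which is legitimate because
`∫ t in (0, 1], |t ^ n * log t| = 1 / (n + 1) ^ 2` makes the sum of the norms converge
(`integral_log_mul_exp_Ioc`).
-/

open MeasureTheory Set in
theorem integrableOn_log_one_add_mul_exp :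
    IntegrableOn (fun t : ℝ => Real.log (1 + t) * Real.exp (-t)) (Ioi 0) := by
  -- Since `0 ≤ log (1 + t) ≤ t`, the integrand is dominated by that of `Γ(2)`.
  have h := Real.GammaIntegral_convergent (s := 2) two_pos
  refine Integrable.mono' h (by fun_prop) ?_
  refine (ae_restrict_iff' measurableSet_Ioi).mpr (Filter.Eventually.of_forall fun t ht => ?_)
  have ht : 0 < t := ht
  have h0 : 0 ≤ Real.log (1 + t) := Real.log_nonneg (by linarith)
  have h1 : Real.log (1 + t) ≤ t := by
    linarith [Real.log_le_sub_one_of_pos (show 0 < 1 + t by linarith)]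
  rw [Real.norm_of_nonneg (mul_nonneg h0 (Real.exp_pos _).le), mul_comm]
  norm_num
  exact mul_le_mul_of_nonneg_left h1 (Real.exp_pos _).le

theorem log_mul_exp_one_add (t : ℝ) :
    Real.log (1 + t) * Real.exp (-(1 + t))
      = (Real.exp 1)⁻¹ * (Real.log (1 + t) * Real.exp (-t)) := by
  rw [neg_add, Real.exp_add, Real.exp_neg 1]
  ring

theorem preimage_one_add_Ioi_one : (fun t : ℝ => 1 + t) ⁻¹' Set.Ioi 1 = Set.Ioi 0 := by
  ext t
  simp

open MeasureTheory Set in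
theorem integrableOn_log_mul_exp_Ioi_one :
    IntegrableOn (fun t : ℝ => Real.log t * Real.exp (-t)) (Ioi 1) := by
  rw [← (measurePreserving_add_left volume (1 : ℝ)).integrableOn_comp_preimage
    (measurableEmbedding_addLeft 1), preimage_one_add_Ioi_one]
  exact (integrableOn_log_one_add_mul_exp.const_mul (Real.exp 1)⁻¹).congr
    (Filter.Eventually.of_forall fun t => (log_mul_exp_one_add t).symm)

open MeasureTheory Set in
theorem integral_log_mul_exp_Ioi_one :
    ∫ t in Ioi (1 : ℝ), Real.log t * Real.exp (-t)
      = (Real.exp 1)⁻¹ * ∫ t in Ioi (0 : ℝ), Real.log (1 + t) * Real.exp (-t) := by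
  rw [← (measurePreserving_add_left volume (1 : ℝ)).setIntegral_preimage_emb
    (measurableEmbedding_addLeft 1), preimage_one_add_Ioi_one, ← integral_const_mul]
  exact integral_congr_ae (Filter.Eventually.of_forall log_mul_exp_one_add)

open MeasureTheory Set in
theorem intervalIntegrable_pow_mul_log (n : ℕ) :
    IntervalIntegrable (fun t : ℝ => t ^ n * Real.log t) volume 0 1 :=
  intervalIntegral.intervalIntegrable_log'.continuousOn_mul (by fun_prop)

open MeasureTheory Set in
theorem integral_pow_mul_log (n : ℕ) :
    ∫ t in (0 : ℝ)..1, t ^ n * Real.log t = -(1 / ((n : ℝ) + 1) ^ 2) := by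
  have hn : (n : ℝ) + 1 ≠ 0 := by positivity
  -- The factor `t * log t` is kept together because it is continuous at `0`, unlike `log t`.
  have h := intervalIntegral.integral_eq_sub_of_hasDerivAt_of_le
    (f := fun t : ℝ => t ^ n * (t * Real.log t) / (n + 1) - t ^ (n + 1) / ((n : ℝ) + 1) ^ 2)
    (f' := fun t : ℝ => t ^ n * Real.log t) zero_le_one ?_ ?_ (intervalIntegrable_pow_mul_log n)
  · rw [h]
    simp
  · have := Real.continuous_mul_log
    fun_prop
  · intro t ht
    have ht0 : t ≠ 0 := ht.1.ne'
    have h1 := (((hasDerivAt_pow (n + 1) t).mul (Real.hasDerivAt_log ht0)).div_const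
      ((n : ℝ) + 1)).sub ((hasDerivAt_pow (n + 1) t).div_const (((n : ℝ) + 1) ^ 2))
    convert! h1 using 1
    · ext x
      change _ = x ^ (n + 1) * Real.log x / ((n : ℝ) + 1) - x ^ (n + 1) / ((n : ℝ) + 1) ^ 2
      ring
    · push_cast
      field_simp
      ring

open MeasureTheory Set in
theorem integral_log_mul_exp_Ioc :
    ∫ t in Ioc (0 : ℝ) 1, Real.log t * Real.exp (-t)
      = -∑' n : ℕ, (-1 : ℝ) ^ n / (n.factorial * ((n : ℝ) + 1) ^ 2) := by
  have hint (n : ℕ) : IntegrableOn (fun t : ℝ => t ^ n * Real.log t) (Ioc 0 1) :=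
    (intervalIntegrable_iff_integrableOn_Ioc_of_le zero_le_one).mp
      (intervalIntegrable_pow_mul_log n)
  have hval (n : ℕ) : ∫ t in Ioc (0 : ℝ) 1, t ^ n * Real.log t = -(1 / ((n : ℝ) + 1) ^ 2) := by
    rw [← intervalIntegral.integral_of_le zero_le_one, integral_pow_mul_log]
  let F : ℕ → ℝ → ℝ := fun n t => (-1) ^ n / n.factorial * (t ^ n * Real.log t)
  have hF (n : ℕ) : Integrable (F n) (volume.restrict (Ioc 0 1)) := (hint n).const_mul _
  have hnorm (n : ℕ) : ∫ t in Ioc (0 : ℝ) 1, ‖F n t‖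
      = 1 / n.factorial * (1 / ((n : ℝ) + 1) ^ 2) := by
    rw [show (1 : ℝ) / ((n : ℝ) + 1) ^ 2 = -∫ t in Ioc (0 : ℝ) 1, t ^ n * Real.log t by
      rw [hval]; ring, ← integral_neg, ← integral_const_mul]
    refine setIntegral_congr_fun measurableSet_Ioc fun t ht => ?_
    have hlog : t ^ n * Real.log t ≤ 0 :=
      mul_nonpos_of_nonneg_of_nonpos (pow_nonneg ht.1.le n) (Real.log_nonpos ht.1.le ht.2)
    simp only [F]
    rw [norm_mul, norm_div, norm_pow, norm_neg, norm_one, one_pow,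
      Real.norm_of_nonneg (by positivity : (0 : ℝ) ≤ n.factorial), Real.norm_of_nonpos hlog]
  have hsum : Summable fun n => ∫ t in Ioc (0 : ℝ) 1, ‖F n t‖ := by
    simp_rw [hnorm]
    refine Summable.of_nonneg_of_le (fun n => by positivity) (fun n => ?_)
      (Real.summable_pow_div_factorial 1)
    rw [one_pow]
    refine mul_le_of_le_one_right (by positivity) ?_
    rw [div_le_one (by positivity)]
    exact one_le_pow₀ (by linarith [n.cast_nonneg (α := ℝ)])
  have key := (hasSum_integral_of_summable_integral_norm hF hsum).tsum_eq
  have hpt (t : ℝ) : ∑' n, F n t = Real.log t * Real.exp (-t) := by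
    have h := (NormedSpace.expSeries_div_hasSum_exp (-t)).mul_left (Real.log t)
    rw [← congrFun Real.exp_eq_exp_ℝ] at h
    rw [← h.tsum_eq]
    refine tsum_congr fun n => ?_
    simp only [F]
    rw [neg_pow t]
    ring
  simp_rw [hpt] at key
  rw [← key, ← tsum_neg]
  refine tsum_congr fun n => ?_
  simp only [F]
  rw [integral_const_mul, hval]
  field_simp

open MeasureTheory Set in
theorem integrableOn_log_mul_exp_Ioc :
    IntegrableOn (fun t : ℝ => Real.log t * Real.exp (-t)) (Ioc 0 1) :=
  (intervalIntegrable_iff_integrableOn_Ioc_of_le zero_le_one).mp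
    (intervalIntegral.intervalIntegrable_log'.mul_continuousOn (by fun_prop))

open MeasureTheory Set in
/-- Restriction to the real axis of the formula for the derivative of the complex Gamma
integral. -/
theorem deriv_Gamma_one_eq_integral :
    deriv Real.Gamma 1 = ∫ t in Ioi (0 : ℝ), Real.log t * Real.exp (-t) := by
  have h := Complex.hasDerivAt_GammaIntegral (s := 1) (by simp)
  have hG : HasDerivAt Complex.Gamma
      (∫ t : ℝ in Ioi 0, (t : ℂ) ^ ((1 : ℂ) - 1) * (Real.log t * Real.exp (-t))) 1 := by
    refine h.congr_of_eventuallyEq ?_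
    have hev : ∀ᶠ s : ℂ in nhds 1, 0 < s.re :=
      Complex.continuous_re.continuousAt.eventually_mem (Ioi_mem_nhds (by simp))
    filter_upwards [hev] with s hs using Complex.Gamma_eq_integral hs
  have hR := HasDerivAt.real_of_complex (z := (1 : ℝ)) (by simpa only [Complex.ofReal_one] using hG)
  simp only [Complex.Gamma_ofReal, Complex.ofReal_re] at hR
  rw [hR.deriv]
  simp only [sub_self, Complex.cpow_zero, one_mul, ← Complex.ofReal_mul]
  rw [integral_complex_ofReal, Complex.ofReal_re]

theorem stmt9 :
    MeasureTheory.IntegrableOn (fun t : ℝ => Real.log (1 + t) * Real.exp (-t)) (Set.Ioi 0) ∧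
    -deriv Real.Gamma 1
      = (∑' n : ℕ, (-1 : ℝ) ^ n / (n.factorial * ((n : ℝ) + 1) ^ 2))
        - (Real.exp 1)⁻¹ * ∫ t in Set.Ioi (0 : ℝ), Real.log (1 + t) * Real.exp (-t) := by
  refine ⟨integrableOn_log_one_add_mul_exp, ?_⟩
  rw [deriv_Gamma_one_eq_integral, ← Set.Ioc_union_Ioi_eq_Ioi (zero_le_one (α := ℝ)),
    MeasureTheory.setIntegral_union (Set.Ioc_disjoint_Ioi le_rfl) measurableSet_Ioi
      integrableOn_log_mul_exp_Ioc integrableOn_log_mul_exp_Ioi_one,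
    Set.Ioc_union_Ioi_eq_Ioi (zero_le_one (α := ℝ)),
    integral_log_mul_exp_Ioc, integral_log_mul_exp_Ioi_one]
  ring
end

section
/- For every real $z > 0$: $\gamma + \log z = z\, E_{1,2}(-z) - e^{-z} \int_0^{\infty} \log\left(1 + \frac{t}{z}\right) e^{-t}\,dt$, where $\gamma = -\Gamma'(1)$ is Euler's constant and the integral converges. -/
open MeasureTheory Set

lemma integral_log_mul_exp_neg :
    ∫ u in Ioi (0 : ℝ), Real.log u * Real.exp (-u) = deriv Real.Gamma 1 := by
  have h1 := Complex.hasDerivAt_GammaIntegral (s := 1) (by simp)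
  have h2 : HasDerivAt Complex.GammaIntegral (-(Real.eulerMascheroniConstant : ℂ)) 1 := by
    refine Complex.hasDerivAt_Gamma_one.congr_of_eventuallyEq ?_
    have : {s : ℂ | 0 < s.re} ∈ nhds (1 : ℂ) :=
      (isOpen_lt continuous_const Complex.continuous_re).mem_nhds (by simp)
    filter_upwards [this] with s hs using (Complex.Gamma_eq_integral hs).symm
  have h3 := h1.unique h2
  rw [Real.hasDerivAt_Gamma_one.deriv]
  simp only [sub_self, Complex.cpow_zero, one_mul, ← Complex.ofReal_mul] at h3
  rw [integral_complex_ofReal] at h3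
  exact_mod_cast h3

lemma integrableOn_log_one_add_div_mul_exp_neg {z : ℝ} (hz : 0 < z) :
    IntegrableOn (fun t : ℝ => Real.log (1 + t / z) * Real.exp (-t)) (Ioi 0) := by
  have h := (Real.GammaIntegral_convergent (s := 2) (by norm_num)).const_mul z⁻¹
  refine Integrable.mono' h (Measurable.aestronglyMeasurable (by fun_prop)) ?_
  filter_upwards [ae_restrict_mem measurableSet_Ioi] with t (ht : 0 < t)
  have h0 : 0 < t / z := by positivity
  have h1 : 0 ≤ Real.log (1 + t / z) := Real.log_nonneg (by linarith)
  have h2 : Real.log (1 + t / z) ≤ t / z := by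
    linarith [Real.log_le_sub_one_of_pos (show 0 < 1 + t / z by linarith)]
  rw [Real.norm_of_nonneg (by positivity)]
  calc Real.log (1 + t / z) * Real.exp (-t) ≤ t / z * Real.exp (-t) := by gcongr
    _ = _ := by
      rw [show (2 : ℝ) - 1 = 1 by norm_num, Real.rpow_one]
      ring

/-- The tail of the integral of `log u · e⁻ᵘ`, after the shift `u = t + z`. -/
lemma integral_Ioi_log_mul_exp_neg {z : ℝ} (hz : 0 < z) :
    IntegrableOn (fun u : ℝ => Real.log u * Real.exp (-u)) (Ioi z) ∧
    ∫ u in Ioi z, Real.log u * Real.exp (-u) = Real.exp (-z) * Real.log z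
      + Real.exp (-z) * ∫ t in Ioi (0 : ℝ), Real.log (1 + t / z) * Real.exp (-t) := by
  have mp := measurePreserving_add_right (volume : Measure ℝ) z
  have me := measurableEmbedding_addRight z
  have hpre : (fun x : ℝ => x + z) ⁻¹' Ioi z = Ioi 0 := by ext x; simp
  have hA := (integrableOn_exp_neg_Ioi 0).const_mul (Real.exp (-z) * Real.log z)
  have hB := (integrableOn_log_one_add_div_mul_exp_neg hz).const_mul (Real.exp (-z))
  have heq : EqOn (fun t : ℝ => Real.exp (-z) * Real.log z * Real.exp (-t)
      + Real.exp (-z) * (Real.log (1 + t / z) * Real.exp (-t)))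
      ((fun u : ℝ => Real.log u * Real.exp (-u)) ∘ (fun x => x + z)) (Ioi 0) := by
    intro t (ht : 0 < t)
    have h1 : t + z = z * (1 + t / z) := by field_simp; ring
    have h2 : Real.log (t + z) = Real.log z + Real.log (1 + t / z) := by
      rw [h1, Real.log_mul hz.ne' (by positivity)]
    have h3 : Real.exp (-(t + z)) = Real.exp (-z) * Real.exp (-t) := by
      rw [← Real.exp_add]; ring_nf
    simp only [Function.comp_apply, h2, h3]
    ring
  constructor
  · rw [← mp.integrableOn_comp_preimage me, hpre]
    exact IntegrableOn.congr_fun (hA.add hB) heq measurableSet_Ioi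
  · rw [← mp.setIntegral_preimage_emb me, hpre]
    refine (setIntegral_congr_fun measurableSet_Ioi heq).symm.trans ?_
    rw [integral_add hA hB,
      integral_const_mul, integral_const_mul, integral_exp_neg_Ioi_zero, mul_one]

lemma integral_log_mul_pow {z : ℝ} (hz : 0 < z) (n : ℕ) :
    ∫ u in (0 : ℝ)..z, Real.log u * u ^ n
      = z ^ (n + 1) * Real.log z / (n + 1) - z ^ (n + 1) / (n + 1) ^ 2 := by
  have hn : (n : ℝ) + 1 ≠ 0 := by positivity
  -- `u log u` is kept as one factor of the primitive because it is continuous at `0`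
  rw [intervalIntegral.integral_eq_sub_of_hasDerivAt_of_le
    (f := fun u => u ^ n * (u * Real.log u) / (n + 1) - u ^ (n + 1) / (n + 1) ^ 2) hz.le]
  · simp only [mul_zero, zero_mul, zero_div, ne_eq, Nat.add_eq_zero_iff, one_ne_zero, and_false,
      not_false_eq_true, zero_pow]
    ring
  · have := Real.continuous_mul_log
    exact Continuous.continuousOn (by fun_prop)
  · intro x hx
    have hx0 : x ≠ 0 := hx.1.ne'
    have h1 := ((hasDerivAt_pow (n + 1) x).mul (Real.hasDerivAt_log hx0)).div_const ((n : ℝ) + 1)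
    have h2 := (hasDerivAt_pow (n + 1) x).div_const (((n : ℝ) + 1) ^ 2)
    refine ((h1.sub h2).congr_deriv ?_).congr_of_eventuallyEq (.of_forall fun u => ?_)
    · push_cast
      field_simp
      ring
    · simp only [Pi.sub_apply, Pi.mul_apply, pow_succ]
      ring
  · exact intervalIntegral.intervalIntegrable_log'.mul_continuousOn (by fun_prop)

lemma integrableOn_Ioc_log_mul {z : ℝ} (hz : 0 < z) {f : ℝ → ℝ} (hf : Continuous f) :
    IntegrableOn (fun u => Real.log u * f u) (Ioc 0 z) :=
  (intervalIntegrable_iff_integrableOn_Ioc_of_le hz.le).1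
    (intervalIntegral.intervalIntegrable_log'.mul_continuousOn hf.continuousOn)

lemma hasSum_exp (x : ℝ) : HasSum (fun n : ℕ => x ^ n / n.factorial) (Real.exp x) := by
  rw [Real.exp_eq_exp_ℝ]
  exact NormedSpace.expSeries_div_hasSum_exp x

/-- The part of the integral of `log u · e⁻ᵘ` near `0`, by termwise integration of the exponential
series. -/
lemma integral_Ioc_log_mul_exp_neg {z : ℝ} (hz : 0 < z) :
    ∫ u in Ioc 0 z, Real.log u * Real.exp (-u)
      = (1 - Real.exp (-z)) * Real.log z - z * Ereal 1 2 (-z) := by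
  set F : ℕ → ℝ → ℝ := fun n u => Real.log u * ((-u) ^ n / n.factorial) with hF
  have hint : ∀ n, Integrable (F n) (volume.restrict (Ioc 0 z)) := fun n =>
    integrableOn_Ioc_log_mul hz (by fun_prop)
  have hlog : Integrable (fun u => |Real.log u|) (volume.restrict (Ioc 0 z)) := by
    simpa using (integrableOn_Ioc_log_mul hz (f := fun _ => 1) (by fun_prop)).norm
  have hsum : Summable fun n => ∫ u in Ioc 0 z, ‖F n u‖ := by
    refine Summable.of_nonneg_of_le (fun n => integral_nonneg fun _ => norm_nonneg _) (fun n => ?_)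
      ((hasSum_exp z).summable.mul_right (∫ u in Ioc 0 z, |Real.log u|))
    rw [← integral_const_mul]
    refine integral_mono_ae (hint n).norm (hlog.const_mul _) ?_
    filter_upwards [ae_restrict_mem measurableSet_Ioc] with u hu
    have h0 : 0 < u := hu.1
    have h1 : u ≤ z := hu.2
    simp only [hF, norm_mul, norm_div, norm_pow, norm_neg, Real.norm_eq_abs, Nat.abs_cast,
      abs_of_pos h0]
    rw [mul_comm]
    gcongr
  have hs := hasSum_integral_of_summable_integral_norm hint hsum
  have hts : ∀ u, ∑' n, F n u = Real.log u * Real.exp (-u) := fun u =>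
    ((hasSum_exp (-u)).mul_left _).tsum_eq
  simp only [hts] at hs
  have hval : ∀ n, ∫ u in Ioc 0 z, F n u = -((-z) ^ (n + 1) / (n + 1).factorial) * Real.log z
      - z * ((-z) ^ n / (n.factorial * ((n : ℝ) + 1) ^ 2)) := by
    intro n
    have hn : (n : ℝ) + 1 ≠ 0 := by positivity
    have hfac : (n.factorial : ℝ) ≠ 0 := by positivity
    have h1 : ∀ u, F n u = ((-1) ^ n / n.factorial) * (Real.log u * u ^ n) := fun u => by
      simp only [hF]
      rw [neg_pow u]
      ring
    simp only [h1]
    rw [integral_const_mul, ← intervalIntegral.integral_of_le hz.le, integral_log_mul_pow hz,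
      Nat.factorial_succ, neg_pow z n, neg_pow z (n + 1)]
    push_cast
    field_simp
    ring
  simp only [hval] at hs
  have hexp : HasSum (fun n : ℕ => -((-z) ^ (n + 1) / (n + 1).factorial) * Real.log z)
      ((1 - Real.exp (-z)) * Real.log z) := by
    have := ((hasSum_nat_add_iff' 1).2 (hasSum_exp (-z))).neg.mul_right (Real.log z)
    simpa using this
  -- the series of `z * E_{1,2}(-z)` converges, being a difference of two convergent series
  have hE := hexp.sub hs
  simp only [sub_sub_cancel] at hE
  have : z * Ereal 1 2 (-z) = (1 - Real.exp (-z)) * Real.log z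
      - ∫ u in Ioc 0 z, Real.log u * Real.exp (-u) := by
    rw [Ereal, ← tsum_mul_left]
    exact hE.tsum_eq
  linarith

theorem stmt10 (z : ℝ) (hz : 0 < z) :
    MeasureTheory.IntegrableOn (fun t : ℝ => Real.log (1 + t / z) * Real.exp (-t)) (Set.Ioi 0) ∧
    (-deriv Real.Gamma 1) + Real.log z
      = z * Ereal 1 2 (-z)
        - Real.exp (-z) * ∫ t in Set.Ioi (0 : ℝ), Real.log (1 + t / z) * Real.exp (-t) := by
  refine ⟨integrableOn_log_one_add_div_mul_exp_neg hz, ?_⟩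
  obtain ⟨htail, htail_eq⟩ := integral_Ioi_log_mul_exp_neg hz
  have hsplit := setIntegral_union (Ioc_disjoint_Ioi le_rfl) measurableSet_Ioi
    (integrableOn_Ioc_log_mul hz (f := fun u => Real.exp (-u)) (by fun_prop)) htail
  rw [Ioc_union_Ioi_eq_Ioi hz.le, integral_log_mul_exp_neg, integral_Ioc_log_mul_exp_neg hz,
    htail_eq] at hsplit
  rw [hsplit]
  ring
end

section
/- Let $s \in \mathbb{Q} \setminus \mathbb{Z}_{\geq 0}$, and let $f \in \mathbb{Q}[[X]]$ be the formal power series $f = \sum_{n=0}^{\infty} \left(\prod_{j=0}^{n-1} (s-j)\right) X^n = \sum_{n=0}^{\infty} s(s-1)\cdots(s-n+1)\, X^n$. Then $f$ is transcendental over $\mathbb{Q}(X)$: there is no nonzero two-variable polynomial $P \in \mathbb{Q}[X,Y]$ such that $P(X, f) = 0$ in the ring $\mathbb{Q}[[X]]$. -/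
/-!
The series `f` satisfies the linear differential equation `X² f' = (sX - 1) f + 1`, and an
algebraic solution of such an equation forces a rational one. Indeed, let `P(X, Y)` be an
annihilator of `f` of least degree `d` in `Y`, with top coefficients `a Y ^ d + b Y ^ (d - 1)`.
Applying `X² d/dX` to `P(X, f) = 0` and replacing `X² f'` by `(sX - 1) f + 1` gives another
annihilator of degree at most `d`; by minimality it is proportional to `P`. Comparing the
coefficients of `Y ^ (d - 1)` gives
`X² (a b' - a' b) - (sX - 1) a b + d a² = 0`, which says that `g = -b / (d a)` satisfies
`X² g' = (sX - 1) g + 1`.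

There is no such rational function: at a nonzero pole `X² g'` would have a larger pole order than
`g`, at zero a smaller one, so `g` is a polynomial; if its degree is `n`, the coefficients of
`X ^ (n + 1)` give `n = s`, which is excluded.
-/

open Polynomial in
/-- The total derivative: `X² d/dX` maps `P(X, f)` to `Q(X, f)`, where `Q` is obtained from `P` by
the chain rule and the differential equation of `f`. -/
lemma exists_total_derivative (s : ℚ) (f : PowerSeries ℚ)
    (hf : PowerSeries.X ^ 2 * PowerSeries.derivative ℚ f
      = coeToPowerSeries.ringHom (C s * X - 1) * f + 1) (P : ℚ[X][X]) :
    ∃ Q : ℚ[X][X], (∀ m : ℕ, Q.coeff m = X ^ 2 * derivative (P.coeff m)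
        + (m : ℚ[X]) * (C s * X - 1) * P.coeff m + ((m : ℚ[X]) + 1) * P.coeff (m + 1)) ∧
      PowerSeries.X ^ 2 * PowerSeries.derivative ℚ (eval₂ coeToPowerSeries.ringHom f P)
        = eval₂ coeToPowerSeries.ringHom f Q := by
  induction P using Polynomial.induction_on' with
  | add p q hp hq =>
    obtain ⟨p', hp, hp'⟩ := hp
    obtain ⟨q', hq, hq'⟩ := hq
    refine ⟨p' + q', fun m => ?_, ?_⟩
    · simp only [coeff_add, hp, hq, derivative_add]
      ring
    · rw [eval₂_add, eval₂_add, map_add, mul_add, hp', hq']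
  | monomial n a =>
    have hX : coeToPowerSeries.ringHom (X : ℚ[X]) = PowerSeries.X := by simp
    have ha : PowerSeries.derivative ℚ (coeToPowerSeries.ringHom a)
        = coeToPowerSeries.ringHom (derivative a) := by
      simp [PowerSeries.derivative_coe]
    cases n with
    | zero =>
      refine ⟨monomial 0 (X ^ 2 * derivative a), fun m => ?_, ?_⟩
      · rcases m with _ | m <;> simp only [coeff_monomial] <;> simp
      · simp only [eval₂_monomial, map_mul, map_pow, hX, pow_zero, mul_one, ha]
    | succ n =>
      refine ⟨monomial (n + 1) (X ^ 2 * derivative a + ((n : ℚ[X]) + 1) * (C s * X - 1) * a)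
        + monomial n (((n : ℚ[X]) + 1) * a), fun m => ?_, ?_⟩
      · simp only [coeff_add, coeff_monomial, Nat.add_right_cancel_iff]
        by_cases h1 : n + 1 = m
        · subst h1
          simp
        · by_cases h2 : n = m
          · subst h2
            simp
          · simp [h1, h2]
      · simp only [eval₂_add, eval₂_monomial, Derivation.leibniz, PowerSeries.derivative_pow,
          smul_eq_mul, ha, map_add, map_mul, map_pow, hX, map_natCast, map_one,
          Nat.add_sub_cancel]
        push_cast
        rw [map_sub, map_mul, map_one, hX] at hf ⊢
        linear_combination (coeToPowerSeries.ringHom a) * ((n : PowerSeries ℚ) + 1) * f ^ n * hf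

open Polynomial in
/-- With `g = -b / (d a)` this says that `X² g' = (sX - 1) g + 1` has no solution in `ℚ(X)`;
here the fraction is in lowest terms. -/
lemma no_rational_solution_of_isCoprime (s : ℚ) (hs : ¬ ∃ m : ℕ, s = m) (d : ℕ) (hd : d ≠ 0)
    (a b : ℚ[X]) (ha : a ≠ 0) (hab : IsCoprime a b)
    (h : X ^ 2 * (a * derivative b - derivative a * b) - (C s * X - 1) * a * b
      + (d : ℚ[X]) * a ^ 2 = 0) : False := by
  -- The denominator `a` does not vanish at `0`.
  have hXa : ¬ X ∣ a := by
    intro hX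
    obtain ⟨n, u, hu, rfl⟩ := WfDvdMonoid.max_power_factor ha irreducible_X
    have hXb : ¬ X ∣ b := fun hb => irreducible_X.not_isUnit (hab.isUnit_of_dvd' hX hb)
    cases n with
    | zero => exact hu (by simpa using hX)
    | succ n =>
      have h' : X ^ (n + 1) * (X * (X * (u * derivative b)
          - (((n : ℚ[X]) + 1) * u + X * derivative u) * b
          - C s * u * b + (d : ℚ[X]) * X ^ n * u ^ 2) + u * b) = 0 := by
        rw [derivative_mul, derivative_X_pow] at h
        simp only [Nat.add_sub_cancel, map_natCast] at h
        push_cast at h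
        linear_combination h
      have h2 := (mul_eq_zero.1 h').resolve_left (pow_ne_zero _ X_ne_zero)
      have h3 : (X : ℚ[X]) ∣ u * b :=
        (dvd_add_right (dvd_mul_right _ _)).1 (h2 ▸ dvd_zero _)
      exact (prime_X.dvd_or_dvd h3).elim hu hXb
  have hcop : IsCoprime a (X ^ 2 : ℚ[X]) :=
    ((irreducible_X.coprime_iff_not_dvd.2 hXa).symm).pow_right
  -- Nor does it vanish elsewhere, since `a ∣ a'` forces `a' = 0`.
  have hdvd : a ∣ derivative a := by
    have h1 : a ∣ X ^ 2 * (derivative a * b) :=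
      ⟨X ^ 2 * derivative b - (C s * X - 1) * b + (d : ℚ[X]) * a, by linear_combination -h⟩
    exact hab.dvd_of_dvd_mul_right (hcop.dvd_of_dvd_mul_left h1)
  have ha' : derivative a = 0 := by
    by_contra hne
    exact absurd (degree_le_of_dvd hdvd hne) (not_le.2 (degree_derivative_lt ha))
  obtain ⟨c, rfl⟩ : ∃ c, a = C c := ⟨_, eq_C_of_derivative_eq_zero ha'⟩
  have hc : c ≠ 0 := by
    rintro rfl
    simp at ha
  have h4 : X ^ 2 * derivative b - (C s * X - 1) * b + C ((d : ℚ) * c) = 0 := by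
    refine (mul_eq_zero.1 (?_ : C c * _ = 0)).resolve_left ha
    rw [ha'] at h
    simp only [C_mul, map_natCast]
    linear_combination h
  have hb : b ≠ 0 := by
    rintro rfl
    simp [hc, hd] at h4
  have h5 := congrArg (fun p => coeff p (b.natDegree + 1)) h4
  have h6 : b.coeff (b.natDegree + 1) = 0 := coeff_eq_zero_of_natDegree_lt (Nat.lt_succ_self _)
  have h7 : (X ^ 2 * derivative b).coeff (b.natDegree + 1)
      = b.natDegree * b.coeff b.natDegree := by
    rcases b.natDegree with _ | n
    · rw [coeff_X_pow_mul']
      simp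
    · rw [show n + 1 + 1 = n + 2 from rfl, coeff_X_pow_mul, coeff_derivative]
      push_cast
      ring
  simp only [sub_mul, one_mul, mul_assoc, coeff_add, coeff_sub, coeff_C_mul, coeff_X_mul, coeff_C,
    h6, h7, coeff_zero, Nat.succ_ne_zero, if_false, sub_zero, add_zero] at h5
  rw [← sub_mul] at h5
  refine hs ⟨b.natDegree, ?_⟩
  have h8 : b.coeff b.natDegree ≠ 0 := leadingCoeff_ne_zero.2 hb
  have := (mul_eq_zero.1 h5).resolve_right h8
  linarith

open Polynomial in
lemma no_rational_solution (s : ℚ) (hs : ¬ ∃ m : ℕ, s = m) (d : ℕ) (hd : d ≠ 0)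
    (a b : ℚ[X]) (ha : a ≠ 0)
    (h : X ^ 2 * (a * derivative b - derivative a * b) - (C s * X - 1) * a * b
      + (d : ℚ[X]) * a ^ 2 = 0) : False := by
  obtain ⟨a', b', hcop, ha', hb'⟩ : ∃ a' b' : ℚ[X], IsCoprime a' b' ∧
      a = EuclideanDomain.gcd a b * a' ∧ b = EuclideanDomain.gcd a b * b' := by
    obtain ⟨a', ha'⟩ := EuclideanDomain.gcd_dvd_left a b
    obtain ⟨b', hb'⟩ := EuclideanDomain.gcd_dvd_right a b
    refine ⟨a', b', ?_, ha', hb'⟩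
    have hg : EuclideanDomain.gcd a b ≠ 0 := fun h0 => ha (by rw [ha', h0, zero_mul])
    refine ⟨EuclideanDomain.gcdA a b, EuclideanDomain.gcdB a b, mul_left_cancel₀ hg ?_⟩
    have := EuclideanDomain.gcd_eq_gcd_ab a b
    linear_combination -this - EuclideanDomain.gcdA a b * ha' - EuclideanDomain.gcdB a b * hb'
  generalize EuclideanDomain.gcd a b = g at ha' hb'
  subst ha' hb'
  have hg0 : g ≠ 0 := left_ne_zero_of_mul ha
  refine no_rational_solution_of_isCoprime s hs d hd a' b' (right_ne_zero_of_mul ha) hcop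
    ((mul_eq_zero.1 (?_ : g ^ 2 * _ = 0)).resolve_left (pow_ne_zero 2 hg0))
  simp only [derivative_mul] at h
  linear_combination h

theorem stmt16 (s : ℚ) (hs : ¬ ∃ m : ℕ, s = m) :
    ¬ ∃ P : Polynomial (Polynomial ℚ), P ≠ 0 ∧
      Polynomial.eval₂ Polynomial.coeToPowerSeries.ringHom
        (PowerSeries.mk fun n : ℕ => ∏ j ∈ Finset.range n, (s - j)) P = 0 := by
  open Polynomial in
  set f : PowerSeries ℚ := PowerSeries.mk fun n : ℕ => ∏ j ∈ Finset.range n, (s - j) with hfdef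
  have hf : PowerSeries.X ^ 2 * PowerSeries.derivative ℚ f
      = coeToPowerSeries.ringHom (C s * X - 1) * f + 1 := by
    have hc : coeToPowerSeries.ringHom (C s * X - 1)
        = PowerSeries.C s * PowerSeries.X - 1 := by simp
    rw [hc, sub_mul, one_mul, mul_assoc, pow_two, mul_assoc]
    ext n
    rcases n with _ | _ | n
    · simp [hfdef]
    · simp [hfdef, PowerSeries.coeff_succ_X_mul, PowerSeries.coeff_one]
    · simp only [hfdef, map_add, map_sub, PowerSeries.coeff_succ_X_mul, PowerSeries.coeff_C_mul,
        PowerSeries.coeff_derivative, PowerSeries.coeff_mk, PowerSeries.coeff_one,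
        Finset.prod_range_succ]
      push_cast
      simp
      ring
  rintro ⟨P₀, hP₀⟩
  -- An annihilator of least degree in `Y`.
  obtain ⟨P, ⟨hP, hPf⟩, hmin⟩ := exists_minimalFor_of_wellFoundedLT
    (fun P : ℚ[X][X] => P ≠ 0 ∧ eval₂ coeToPowerSeries.ringHom f P = 0) natDegree ⟨P₀, hP₀⟩
  obtain ⟨e, he⟩ : ∃ e, P.natDegree = e + 1 := by
    refine Nat.exists_eq_succ_of_ne_zero fun h0 => ?_
    rw [eq_C_of_natDegree_eq_zero h0, eval₂_C] at hPf
    refine hP ?_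
    rw [eq_C_of_natDegree_eq_zero h0, C_eq_zero]
    simpa using hPf
  obtain ⟨Q, hQ, hQf⟩ := exists_total_derivative s f hf P
  have hlead : P.coeff (e + 1) ≠ 0 := he ▸ leadingCoeff_ne_zero.2 hP
  have hbig : ∀ m, e + 1 < m → P.coeff m = 0 := fun m hm =>
    coeff_eq_zero_of_natDegree_lt (he ▸ hm)
  -- The top coefficients cancel in `R`, so `R = 0` by minimality.
  set R : ℚ[X][X] := C (P.coeff (e + 1)) * Q - C (Q.coeff (e + 1)) * P with hR
  have hRf : eval₂ coeToPowerSeries.ringHom f R = 0 := by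
    rw [hR, eval₂_sub, eval₂_mul, eval₂_mul, ← hQf, hPf]
    simp
  have hRdeg : R.natDegree ≤ e := by
    refine natDegree_le_iff_coeff_eq_zero.2 fun m hm => ?_
    rw [hR, coeff_sub, coeff_C_mul, coeff_C_mul]
    rcases (Nat.succ_le_of_lt hm).eq_or_lt with h | h
    · subst h
      ring
    · rw [hQ m, hbig m h, hbig (m + 1) (by omega)]
      simp
  have hR0 : R = 0 := by
    by_contra hne
    have := hmin ⟨hne, hRf⟩ (by omega)
    omega
  have hcoef := congrArg (fun p => coeff p e) hR0
  simp only [hR, coeff_sub, coeff_C_mul, coeff_zero, hQ, hbig (e + 1 + 1) (by omega)] at hcoef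
  refine no_rational_solution s hs (e + 1) (Nat.succ_ne_zero e) (P.coeff (e + 1)) (P.coeff e)
    hlead ?_
  push_cast at hcoef ⊢
  linear_combination hcoef
end
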